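/- There exists an absolute constant c > 0 such that the following holds: for every integer k ≥ 2, letting p denote the least prime divisor of k, every subset A ⊆ ℤ_k \ {0} with |A| ≤ exp(c·(log p)^{1/3}) is sequenceable. -/

import Mathlib

/-- A list `l` (an ordering of a finite set) is a *sequencing* if its partial sums
`p_i = l_1 + ⋯ + l_i` (for `1 ≤ i ≤ |l|`) are pairwise distinct, and moreover
`p_i ≠ 0` for every `1 ≤ i ≤ |l| - 1`. -/
def IsSequencing {G : Type*} [AddCommGroup G] (l : List G) : Prop :=
  (∀ i j : ℕ, 1 ≤ i → i < j → j ≤ l.length → (l.take i).sum ≠ (l.take j).sum) ∧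
  (∀ i : ℕ, 1 ≤ i → i ≤ l.length - 1 → (l.take i).sum ≠ 0)

/-- A finite subset `A` of an abelian group is *sequenceable* if some ordering of its
elements is a sequencing. -/
def Sequenceable {G : Type*} [AddCommGroup G] [DecidableEq G] (A : Finset G) : Prop :=
  ∃ l : List G, l.Nodup ∧ l.toFinset = A ∧ IsSequencing l

/-!
Cut `A` into dissociated blocks of size `2h` with `h ≈ log² |A|` and a remainder `E` which has no
dissociated subset of size `2h`. A set of bounded dissociativity is spanned, with coefficients in
`{-1, 0, 1}`, by `O(h)` of its elements. As `log p` is at least of order `log³ |A|`, Dirichlet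
approximation finds a multiplier below `p` which makes all of these elements small; being a unit, it
turns the relations between subset sums into relations between integers. A set of nonzero integers
is always sequenceable, which settles the case of at most one block.

With at least two blocks, `A` is arranged in two sides. The elements of `E` that become negative
open the first side, those that become positive the second side, and each side continues with one
half of every block. The blocks are permuted at random. Let `T ≈ 2 log |A|`. An interval that
contains between `T` and `2h - T` elements of some block has sum zero with probability at most
`2⁻ᵀ`, by dissociativity, and a union bound over the `|A|²` intervals applies. Any other interval,
or else its complement, consists of elements of `E` and of fewer than `T` elements at an end of at
most two cyclically adjacent blocks. Redrawing a single block creates such a local conflict with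
probability at most `1/2`, so these can be avoided altogether, at the cost of a factor `2` in the
union bound. Next to `E` this depends on the order of `E` on each side: averaging over the choice of
the first element among the smallest ones gives an order whose partial sums rarely cause conflicts.
-/

open Finset

theorem sum_filter_eq_take_sum_sub_take_sum {G : Type*} [AddCommGroup G] {n : ℕ} (f : Fin n → G)
    {x y : ℕ} (hxy : x ≤ y) :
    ∑ t with x ≤ t.val ∧ t.val < y, f t =
      ((List.ofFn f).take y).sum - ((List.ofFn f).take x).sum := by
  have hsplit : univ.filter (fun t : Fin n ↦ t.val < y) =
      univ.filter (fun t : Fin n ↦ t.val < x) ∪ univ.filter (fun t ↦ x ≤ t.val ∧ t.val < y) := by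
    ext t
    simp only [mem_filter, mem_univ, true_and, mem_union]
    lia
  have hdisj : Disjoint (univ.filter (fun t : Fin n ↦ t.val < x))
      (univ.filter (fun t ↦ x ≤ t.val ∧ t.val < y)) :=
    disjoint_filter.2 fun t _ ht ht' ↦ by lia
  rw [List.sum_take_ofFn, List.sum_take_ofFn, hsplit, sum_union hdisj, add_sub_cancel_left]

section Criteria

variable {G : Type*} [AddCommGroup G] [DecidableEq G]

theorem sequenceable_toFinset {l : List G} (hl : l.Nodup)
    (hsum : ∀ i j : ℕ, i < j → j ≤ l.length → 0 < i ∨ j < l.length →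
      (l.take i).sum ≠ (l.take j).sum) : Sequenceable l.toFinset :=
  ⟨l, hl, rfl, fun i j hi hij hj ↦ hsum i j hij hj (Or.inl hi), fun i hi hil h ↦
    hsum 0 i (by lia) (by lia) (Or.inr (by lia)) (by simpa using h.symm)⟩

theorem sequenceable_image_univ_of_fin {n : ℕ} {f : Fin n → G} (hf : f.Injective)
    (hsum : ∀ x y : Fin n, x ≤ y → ∑ t ∈ Icc x y, f t = 0 → Icc x y = univ) :
    Sequenceable (univ.image f) := by
  have himage : (List.ofFn f).toFinset = univ.image f := by ext; simp [eq_comm]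
  rw [← himage]
  refine sequenceable_toFinset (List.nodup_ofFn.2 hf) fun i j hij hj hproper heq ↦ ?_
  rw [List.length_ofFn] at hj hproper
  have hIcc : Icc (⟨i, by lia⟩ : Fin n) ⟨j - 1, by lia⟩ =
      univ.filter (fun t : Fin n ↦ i ≤ t.val ∧ t.val < j) := by
    ext t
    simp only [mem_Icc, Fin.le_def, mem_filter, mem_univ, true_and]
    lia
  have huniv := hsum ⟨i, by lia⟩ ⟨j - 1, by lia⟩ (Fin.mk_le_mk.2 (by lia)) (by
    rw [hIcc, sum_filter_eq_take_sum_sub_take_sum f hij.le, heq, sub_self])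
  have hfirst := (mem_Icc.1 (huniv ▸ mem_univ (⟨0, by lia⟩ : Fin n))).1
  have hlast := (mem_Icc.1 (huniv ▸ mem_univ (⟨n - 1, by lia⟩ : Fin n))).2
  simp only [Fin.mk_le_mk] at hfirst hlast
  lia

theorem sequenceable_image_univ {Z : Type*} [Fintype Z] [LinearOrder Z] [LocallyFiniteOrder Z]
    {f : Z → G} (hf : f.Injective)
    (hsum : ∀ x y : Z, x ≤ y → ∑ z ∈ Icc x y, f z = 0 → Icc x y = univ) :
    Sequenceable (univ.image f) := by
  let e : Fin (Fintype.card Z) ≃o Z := Fintype.orderIsoFinOfCardEq Z rfl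
  have hIcc : ∀ x y, Icc (e x) (e y) = (Icc x y).map e.toEquiv.toEmbedding := fun x y ↦ by
    ext z
    obtain ⟨t, rfl⟩ := e.surjective z
    simp
  have himage : univ.image (f ∘ e) = univ.image f := by
    ext g
    simp [e.surjective.exists]
  rw [← himage]
  refine sequenceable_image_univ_of_fin (hf.comp e.injective) fun x y hxy h0 ↦ ?_
  have huniv := hsum (e x) (e y) (e.monotone hxy) (by rw [hIcc, sum_map]; exact h0)
  rw [hIcc] at huniv
  ext t
  have ht := huniv ▸ mem_univ (e t)
  simpa using ht

theorem sequenceable_image_univ_of_key {Z K : Type*} [Fintype Z] [LinearOrder K] {key : Z → K}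
    (hkey : key.Injective) {f : Z → G} (hf : f.Injective)
    (hsum : ∀ x y, key x ≤ key y → ∑ z with key x ≤ key z ∧ key z ≤ key y, f z = 0 →
      ∀ z, key x ≤ key z ∧ key z ≤ key y) :
    Sequenceable (univ.image f) := by
  let _ : LinearOrder Z := LinearOrder.lift' key hkey
  let _ : LocallyFiniteOrder Z := Fintype.toLocallyFiniteOrder
  have hIcc : ∀ x y : Z, Icc x y = ({z | key x ≤ key z ∧ key z ≤ key y} : Finset Z) :=
    fun x y ↦ by
      ext z
      rw [mem_Icc, mem_filter_univ]
      rfl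
  refine sequenceable_image_univ hf fun x y hxy h0 ↦ eq_univ_of_forall fun z ↦ ?_
  rw [hIcc] at h0 ⊢
  exact (mem_filter_univ z).2 (hsum x y hxy h0 z)

end Criteria

section Resampling

variable {ι S κ : Type*}

/-- The configuration `ω` violates no unary constraint `U` and no binary constraint `J` on the
coordinates in `F`; the predicates describe the forbidden values. -/
def AvoidsOn (U : ι → S → Prop) (J : ι → ι → S → S → Prop) (F : Finset ι) (ω : ι → S) : Prop :=
  (∀ l ∈ F, ¬ U l (ω l)) ∧ ∀ l ∈ F, ∀ l' ∈ F, l ≠ l' → ¬ J l l' (ω l) (ω l')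

/-- The value `σ` at the coordinate `l` violates a constraint, the other coordinates being those
of `ω`. -/
def ConflictsAt (U : ι → S → Prop) (J : ι → ι → S → S → Prop) (l : ι) (ω : ι → S) (σ : S) : Prop :=
  U l σ ∨ ∃ l' ≠ l, J l l' σ (ω l') ∨ J l' l (ω l') σ

variable {U : ι → S → Prop} {J : ι → ι → S → S → Prop}

theorem AvoidsOn.update_insert [DecidableEq ι] {F : Finset ι} {ω : ι → S} {l : ι} {σ : S}
    (hω : AvoidsOn U J F ω) (hσ : ¬ ConflictsAt U J l ω σ) :
    AvoidsOn U J (insert l F) (Function.update ω l σ) := by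
  simp only [ConflictsAt, not_or, not_exists, not_and] at hσ
  have hF : ∀ a ∈ insert l F, a ≠ l → a ∈ F := fun a ha hal ↦ mem_of_mem_insert_of_ne ha hal
  refine ⟨fun a ha ↦ ?_, fun a ha b hb hab ↦ ?_⟩
  · rcases eq_or_ne a l with rfl | hal
    · simpa using hσ.1
    · simpa [hal] using hω.1 a (hF a ha hal)
  · rcases eq_or_ne a l with rfl | hal
    · simpa [hab.symm] using (hσ.2 b hab.symm).1
    · rcases eq_or_ne b l with rfl | hbl
      · simpa [hal] using (hσ.2 a hal).2
      · simpa [hal, hbl] using hω.2 a (hF a ha hal) b (hF b hb hbl) hab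

variable [Fintype S]

open scoped Classical in
theorem exists_avoidsOn [Nonempty S]
    (hconf : ∀ l ω, 2 * #{σ | ConflictsAt U J l ω σ} ≤ Fintype.card S) (F : Finset ι) :
    ∃ ω, AvoidsOn U J F ω := by
  induction F using Finset.induction_on with
  | empty => exact ⟨fun _ ↦ Classical.arbitrary S, by simp [AvoidsOn]⟩
  | insert l F _ ih =>
    obtain ⟨ω, hω⟩ := ih
    have hfree : ∃ σ, ¬ ConflictsAt U J l ω σ := by
      by_contra! hall
      have hcard := hconf l ω
      rw [filter_true_of_mem fun σ _ ↦ hall σ, card_univ] at hcard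
      have := Fintype.card_pos (α := S)
      lia
    exact ⟨_, hω.update_insert hfree.choose_spec⟩

variable [DecidableEq ι]

theorem sum_card_filter_update [Fintype ι] (p : (ι → S) → Prop) [DecidablePred p] (l : ι) :
    ∑ ω : ι → S, #{σ | p (Function.update ω l σ)} = Fintype.card S * #{ω | p ω} := by
  have hleft : ∑ ω : ι → S, #{σ | p (Function.update ω l σ)} =
      #{q : (ι → S) × S | p (Function.update q.1 l q.2)} := by
    simp_rw [card_filter, Fintype.sum_prod_type]
  have hright : Fintype.card S * #{ω | p ω} = #{q : (ι → S) × S | p q.1} := by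
    rw [mul_comm, ← card_univ, ← card_product]
    congr 1
    ext q
    simp
  rw [hleft, hright]
  exact card_bij' (fun q _ ↦ (Function.update q.1 l q.2, q.1 l))
    (fun q _ ↦ (Function.update q.1 l q.2, q.1 l)) (by simp) (by simp) (by simp) (by simp)

open scoped Classical in
theorem mul_card_filter_and_le_two_mul_card_filter [Fintype ι] [Nonempty S]
    {good event : (ι → S) → Prop} (l : ι) {M : ℕ}
    (hgood : ∀ ω, good ω → 2 * #{σ | ¬ good (Function.update ω l σ)} ≤ Fintype.card S)
    (hevent : ∀ ω, M * #{σ | event (Function.update ω l σ)} ≤ Fintype.card S) :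
    M * #{ω | good ω ∧ event ω} ≤ 2 * #{ω | good ω} := by
  have hfibre (ω : ι → S) :
      M * #{σ | good (Function.update ω l σ) ∧ event (Function.update ω l σ)} ≤
        2 * #{σ | good (Function.update ω l σ)} := by
    by_cases hω : ∃ τ, good (Function.update ω l τ)
    · obtain ⟨τ, hτ⟩ := hω
      have hbad := hgood _ hτ
      simp only [Function.update_idem] at hbad
      have hsplit := card_filter_add_card_filter_not (s := univ)
        fun σ ↦ good (Function.update ω l σ)
      rw [card_univ] at hsplit
      calc _ ≤ M * #{σ | event (Function.update ω l σ)} := by gcongr; exact And.right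
        _ ≤ Fintype.card S := hevent ω
        _ ≤ _ := by lia
    · simp [not_exists.1 hω]
  refine le_of_mul_le_mul_left ?_ (Fintype.card_pos (α := S))
  calc _ = M * ∑ ω : ι → S,
        #{σ | good (Function.update ω l σ) ∧ event (Function.update ω l σ)} := by
        rw [sum_card_filter_update fun ω ↦ good ω ∧ event ω, mul_left_comm]
    _ ≤ 2 * ∑ ω : ι → S, #{σ | good (Function.update ω l σ)} := by
        rw [mul_sum, mul_sum]
        exact sum_le_sum fun ω _ ↦ hfibre ω
    _ = _ := by rw [sum_card_filter_update good, mul_left_comm]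

open scoped Classical in
theorem exists_good_forall_not_event [Finite ι] [Nonempty S] {good : (ι → S) → Prop}
    {event : κ → (ι → S) → Prop} {K : Finset κ} {M : ℕ} (hex : ∃ ω, good ω)
    (hgood : ∀ l ω, good ω → 2 * #{σ | ¬ good (Function.update ω l σ)} ≤ Fintype.card S)
    (hevent : ∀ e ∈ K, ∃ l, ∀ ω, M * #{σ | event e (Function.update ω l σ)} ≤ Fintype.card S)
    (hM : 2 * #K < M) : ∃ ω, good ω ∧ ∀ e ∈ K, ¬ event e ω := by
  have := Fintype.ofFinite ι
  by_contra! hcover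
  have hpos : 0 < #{ω | good ω} := card_pos.2 (hex.imp fun ω hω ↦ by simpa using hω)
  have hsub : ({ω | good ω} : Finset (ι → S)) ⊆ K.biUnion fun e ↦ {ω | good ω ∧ event e ω} := by
    intro ω hω
    obtain ⟨e, he, hev⟩ := hcover ω (mem_filter.1 hω).2
    exact mem_biUnion.2 ⟨e, he, mem_filter.2 ⟨mem_univ _, (mem_filter.1 hω).2, hev⟩⟩
  have hle : M * #{ω | good ω} ≤ 2 * #K * #{ω | good ω} :=
    calc _ ≤ M * ∑ e ∈ K, #{ω | good ω ∧ event e ω} := by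
          gcongr
          exact (card_le_card hsub).trans card_biUnion_le
      _ ≤ ∑ _e ∈ K, 2 * #{ω | good ω} := by
          rw [mul_sum]
          refine sum_le_sum fun e he ↦ ?_
          obtain ⟨l, hl⟩ := hevent e he
          exact mul_card_filter_and_le_two_mul_card_filter l (hgood l) hl
      _ = _ := by rw [sum_const, smul_eq_mul]; ring
  exact hM.not_ge (Nat.le_of_mul_le_mul_right hle hpos)

open scoped Classical in
theorem exists_avoidsOn_forall_not_event [Fintype ι] [Nonempty S]
    {event : κ → (ι → S) → Prop} {K : Finset κ} {M : ℕ}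
    (hconf : ∀ l ω, 2 * #{σ | ConflictsAt U J l ω σ} ≤ Fintype.card S)
    (hevent : ∀ e ∈ K, ∃ l, ∀ ω, M * #{σ | event e (Function.update ω l σ)} ≤ Fintype.card S)
    (hM : 2 * #K < M) : ∃ ω, AvoidsOn U J univ ω ∧ ∀ e ∈ K, ¬ event e ω := by
  refine exists_good_forall_not_event (exists_avoidsOn hconf univ) (fun l ω hω ↦ ?_) hevent hM
  refine le_trans ?_ (hconf l ω)
  gcongr with σ
  intro hbad
  contrapose! hbad
  simpa using hω.update_insert hbad

end Resampling

section Binomial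

theorem two_pow_le_choose {T n u : ℕ} (hu : T ≤ u) (hn : u + T ≤ n) : 2 ^ T ≤ n.choose u := by
  induction T generalizing n u with
  | zero => exact Nat.choose_pos hn
  | succ T ih =>
    obtain ⟨n, rfl⟩ : ∃ m, n = m + 1 := ⟨n - 1, by lia⟩
    obtain ⟨u, rfl⟩ : ∃ m, u = m + 1 := ⟨u - 1, by lia⟩
    rw [Nat.choose_succ_succ', pow_succ, mul_two]
    exact add_le_add (ih (by lia) (by lia)) (ih (by lia) (by lia))

theorem choose_le_choose_of_le_half {n r u : ℕ} (hru : r ≤ u) (hu : 2 * u ≤ n) :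
    n.choose r ≤ n.choose u := by
  induction u, hru using Nat.le_induction with
  | base => rfl
  | succ u _ ih => exact (ih (by lia)).trans (Nat.choose_le_succ_of_lt_half_left (by lia))

theorem le_choose {n u : ℕ} (hu : 1 ≤ u) (hn : u < n) : n ≤ n.choose u := by
  have hhalf : ∀ v, 1 ≤ v → 2 * v ≤ n → n ≤ n.choose v := fun v hv hvn ↦ by
    simpa using choose_le_choose_of_le_half hv hvn
  rcases le_total (2 * u) n with h | h
  · exact hhalf u hu h
  · exact Nat.choose_symm hn.le ▸ hhalf (n - u) (by lia) (by lia)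

end Binomial

section DissociatedFamily

variable {ι G : Type*} [AddCommGroup G]

/-- A family all of whose finite subfamilies have distinct sums: the indexed counterpart of
`AddDissociated`. -/
def DissociatedFamily (d : ι → G) : Prop := Function.Injective fun F : Finset ι ↦ ∑ i ∈ F, d i

theorem DissociatedFamily.comp_perm {d : ι → G} (hd : DissociatedFamily d) (π : Equiv.Perm ι) :
    DissociatedFamily (d ∘ π) := fun F F' h ↦
  map_injective π.toEmbedding <| hd <| by
    simpa only [sum_map, Equiv.coe_toEmbedding, Function.comp_apply] using h

theorem DissociatedFamily.sum_ne_zero {d : ι → G} (hd : DissociatedFamily d) {F : Finset ι}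
    (hF : F.Nonempty) : ∑ i ∈ F, d i ≠ 0 := fun h ↦
  hF.ne_empty (hd (h.trans sum_empty.symm))

theorem exists_perm_map_eq [Finite ι] {F F' : Finset ι} (h : #F = #F') :
    ∃ π : Equiv.Perm ι, F.map π.toEmbedding = F' := by
  classical
  have := Fintype.ofFinite ι
  let e : {x // x ∈ F} ≃ {x // x ∈ F'} := equivOfCardEq h
  refine ⟨e.extendSubtype, eq_of_subset_of_card_le (fun x hx ↦ ?_) (by rw [card_map, h])⟩
  obtain ⟨y, hy, rfl⟩ := mem_map.1 hx
  exact e.extendSubtype_mem y hy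

variable [Fintype ι] [DecidableEq ι]

theorem card_filter_map_perm_eq_mul_choose {I F : Finset ι} (h : #F = #I) :
    #{π : Equiv.Perm ι | I.map π.toEmbedding = F} * (Fintype.card ι).choose #I =
      (Fintype.card ι).factorial := by
  have hfibre : ∀ F' ∈ powersetCard #I univ, #{π : Equiv.Perm ι | I.map π.toEmbedding = F'} =
      #{π : Equiv.Perm ι | I.map π.toEmbedding = F} := fun F' hF' ↦ by
    obtain ⟨τ, hτ⟩ := exists_perm_map_eq ((mem_powersetCard.1 hF').2.trans h.symm)
    refine card_equiv (Equiv.mulLeft τ) fun π ↦ ?_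
    have hmap : I.map (τ * π).toEmbedding = (I.map π.toEmbedding).map τ.toEmbedding := by
      rw [map_map]; rfl
    simp only [mem_filter, mem_univ, true_and, Equiv.coe_mulLeft, hmap, ← hτ]
    exact (map_injective τ.toEmbedding).eq_iff.symm
  have hcount := card_eq_sum_card_fiberwise (s := (univ : Finset (Equiv.Perm ι)))
    (f := fun π ↦ I.map π.toEmbedding) (t := powersetCard #I univ)
    fun π _ ↦ by simp
  rw [sum_congr rfl hfibre, sum_const, card_powersetCard, card_univ, card_univ, Fintype.card_perm,
    smul_eq_mul] at hcount
  rw [hcount, mul_comm]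

open scoped Classical in
/-- The number of permutations of the family `d` whose entries at the places `I` sum to `c`. -/
noncomputable def hitCount (d : ι → G) (I : Finset ι) (c : G) : ℕ :=
  #{π : Equiv.Perm ι | ∑ t ∈ I, d (π t) = c}

variable {d : ι → G}

theorem DissociatedFamily.hitCount_mul_choose_le (hd : DissociatedFamily d) (I : Finset ι)
    (c : G) : hitCount d I c * (Fintype.card ι).choose #I ≤ (Fintype.card ι).factorial := by
  classical
  rcases (filter (fun π : Equiv.Perm ι ↦ ∑ t ∈ I, d (π t) = c) univ).eq_empty_or_nonempty with
    h | ⟨π₀, hπ₀⟩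
  · simp [hitCount, h]
  rw [← card_filter_map_perm_eq_mul_choose (card_map π₀.toEmbedding)]
  refine Nat.mul_le_mul_right _ (card_le_card fun π hπ ↦ mem_filter.2 ⟨mem_univ _, hd ?_⟩)
  simpa using (mem_filter.1 hπ).2.trans (mem_filter.1 hπ₀).2.symm

theorem DissociatedFamily.two_pow_mul_hitCount_le (hd : DissociatedFamily d) {I : Finset ι} {T : ℕ}
    (hT : T ≤ #I) (hI : #I + T ≤ Fintype.card ι) (c : G) :
    2 ^ T * hitCount d I c ≤ (Fintype.card ι).factorial :=
  calc _ ≤ (Fintype.card ι).choose #I * hitCount d I c := by gcongr; exact two_pow_le_choose hT hI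
    _ ≤ _ := by rw [mul_comm]; exact hd.hitCount_mul_choose_le I c

theorem DissociatedFamily.card_mul_hitCount_le (hd : DissociatedFamily d) {I : Finset ι}
    (hI : I.Nonempty) (hI' : #I < Fintype.card ι) (c : G) :
    Fintype.card ι * hitCount d I c ≤ (Fintype.card ι).factorial :=
  calc _ ≤ (Fintype.card ι).choose #I * hitCount d I c := by
        gcongr; exact le_choose hI.card_pos hI'
    _ ≤ _ := by rw [mul_comm]; exact hd.hitCount_mul_choose_le I c

theorem sum_hitCount_le (d : ι → G) (I : Finset ι) (C : Finset G) :
    ∑ c ∈ C, hitCount d I c ≤ (Fintype.card ι).factorial := by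
  classical
  rw [← Fintype.card_perm, ← card_univ]
  exact (sum_card_fiberwise_eq_card_filter univ C _).trans_le (card_le_univ _)

/-- The expected number, scaled by the number of permutations, of `1 ≤ u < T` for which the entries
of the permuted family `d` at the places `I u` sum to `c`. -/
noncomputable def hitWeight (d : ι → G) (I : ℕ → Finset ι) (T : ℕ) (c : G) : ℕ :=
  ∑ u ∈ Ico 1 T, hitCount d (I u) c

theorem sum_hitWeight_le (d : ι → G) (I : ℕ → Finset ι) (T : ℕ) (C : Finset G) :
    ∑ c ∈ C, hitWeight d I T c ≤ T * (Fintype.card ι).factorial := by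
  unfold hitWeight
  rw [sum_comm]
  calc _ ≤ ∑ _u ∈ Ico 1 T, (Fintype.card ι).factorial := sum_le_sum fun u _ ↦ sum_hitCount_le _ _ _
    _ ≤ _ := by
      rw [sum_const, Nat.card_Ico, smul_eq_mul]
      exact Nat.mul_le_mul_right _ (Nat.sub_le _ _)

/- The term `u = 1` costs `1 / R` and each of the fewer than `T` others at most `2 / (R (R - 1))`,
where `R = Fintype.card ι`. -/
theorem DissociatedFamily.card_mul_hitWeight_le (hd : DissociatedFamily d) {I : ℕ → Finset ι}
    {T : ℕ} (hT : 2 * T < Fintype.card ι) (hI : ∀ u < T, #(I u) = u) (c : G) :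
    Fintype.card ι * hitWeight d I T c ≤ 2 * (Fintype.card ι).factorial := by
  set R := Fintype.card ι
  rcases Nat.lt_or_ge 1 T with hT1 | hT1
  swap
  · simp [hitWeight, Ico_eq_empty_of_le hT1]
  have hone : R * hitCount d (I 1) c ≤ R.factorial :=
    hd.card_mul_hitCount_le (card_pos.1 (by simp [hI 1 hT1])) (by rw [hI 1 hT1]; lia) c
  have hRT : R * T ≤ R.choose 2 := by
    rw [Nat.choose_two_right, Nat.le_div_iff_mul_le two_pos, mul_assoc]
    exact Nat.mul_le_mul_left _ (by lia)
  have hrest : ∀ u ∈ Ico 2 T, T * (R * hitCount d (I u) c) ≤ R.factorial := fun u hu ↦ by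
    obtain ⟨hu2, huT⟩ := mem_Ico.1 hu
    calc _ = hitCount d (I u) c * (R * T) := by ring
      _ ≤ hitCount d (I u) c * R.choose #(I u) := by
        rw [hI u huT]
        exact Nat.mul_le_mul_left _ (hRT.trans (choose_le_choose_of_le_half hu2 (by lia)))
      _ ≤ _ := hd.hitCount_mul_choose_le _ c
  have hsum : R * ∑ u ∈ Ico 2 T, hitCount d (I u) c ≤ R.factorial := by
    refine le_of_mul_le_mul_left ?_ (show 0 < T by lia)
    calc _ ≤ ∑ _u ∈ Ico 2 T, R.factorial := by
          rw [mul_sum, mul_sum]; exact sum_le_sum hrest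
      _ ≤ _ := by
        rw [sum_const, Nat.card_Ico, smul_eq_mul]
        exact Nat.mul_le_mul_right _ (Nat.sub_le _ _)
  rw [hitWeight, sum_eq_sum_Ico_succ_bot hT1, mul_add, two_mul]
  exact add_le_add hone hsum

end DissociatedFamily

section Integers

variable {G : Type*} [AddCommGroup G]

/-- No nonempty block of consecutive entries of `L` sums to zero, except possibly `L` itself. -/
def NoProperZeroSumInfix (L : List G) : Prop :=
  ∀ m : List G, m ≠ [] → m <:+: L → m.sum = 0 → m = L

theorem NoProperZeroSumInfix.sequenceable [DecidableEq G] {L : List G}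
    (h : NoProperZeroSumInfix L) (hL : L.Nodup) : Sequenceable L.toFinset := by
  refine sequenceable_toFinset hL fun i j hij hj hproper heq ↦ ?_
  have hsplit : L.take j = L.take i ++ (L.drop i).take (j - i) := by
    rw [← List.take_add, Nat.add_sub_cancel' hij.le]
  have hlen : ((L.drop i).take (j - i)).length = j - i := by
    rw [List.length_take, List.length_drop]; lia
  have hwhole := h ((L.drop i).take (j - i)) (List.length_pos_iff.1 (by lia))
    ((List.take_prefix _ _).isInfix.trans (List.drop_suffix _ _).isInfix)
    (by simpa [hsplit] using heq)
  rw [hwhole] at hlen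
  lia

/-- `X ++ Y` orders the set `A` of integers with the positive elements first, and without a proper
block of consecutive entries of sum zero. -/
structure IsSignSortedOrdering (A : Finset ℤ) (X Y : List ℤ) : Prop where
  pos : ∀ x ∈ X, 0 < x
  neg : ∀ y ∈ Y, y < 0
  nodup : (X ++ Y).Nodup
  toFinset : (X ++ Y).toFinset = A
  noZeroSum : NoProperZeroSumInfix (X ++ Y)

namespace IsSignSortedOrdering

variable {A : Finset ℤ} {X Y : List ℤ}

theorem sum_eq (h : IsSignSortedOrdering A X Y) : (X ++ Y).sum = ∑ x ∈ A, x := by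
  rw [← h.toFinset, List.sum_toFinset _ h.nodup, List.map_id']

theorem neg_reverse (h : IsSignSortedOrdering A X Y) :
    IsSignSortedOrdering (A.map (Equiv.neg ℤ).toEmbedding) (Y.map Neg.neg).reverse
      (X.map Neg.neg).reverse where
  pos x hx := by simpa using h.neg (-x) (by simpa [neg_eq_iff_eq_neg] using hx)
  neg x hx := by simpa using h.pos (-x) (by simpa [neg_eq_iff_eq_neg] using hx)
  nodup := by
    rw [← List.reverse_append, ← List.map_append, List.nodup_reverse]
    exact h.nodup.map neg_injective
  toFinset := by
    rw [← List.reverse_append, ← List.map_append, List.toFinset_reverse, ← h.toFinset]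
    ext
    simp
  noZeroSum m hm hinf hsum := by
    rw [← List.reverse_append, ← List.map_append] at hinf ⊢
    have hmap : (m.reverse.map Neg.neg) <:+: X ++ Y := by
      simpa [Function.comp_def] using (List.reverse_infix.2 hinf).map Neg.neg
    have hwhole := h.noZeroSum _ (by simpa using hm) hmap
      (by rw [← List.sum_neg, List.sum_reverse, hsum, neg_zero])
    rw [← hwhole]
    simp

/- A block of sum zero starting at `p` contains the whole of `p :: X`, and what it omits of `Y`
would make the total sum negative. -/
theorem cons (h : IsSignSortedOrdering A X Y) {p : ℤ} (hp : 0 < p) (hpA : p ∉ A)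
    (htotal : 0 ≤ p + ∑ x ∈ A, x) (hA : A = ∅ ∨ ∑ x ∈ A, x ≠ 0) :
    IsSignSortedOrdering (insert p A) (p :: X) Y where
  pos := List.forall_mem_cons.2 ⟨hp, h.pos⟩
  neg := h.neg
  nodup := List.nodup_cons.2 ⟨fun hmem ↦ hpA (h.toFinset ▸ List.mem_toFinset.2 hmem), h.nodup⟩
  toFinset := by rw [List.cons_append, List.toFinset_cons, h.toFinset]
  noZeroSum m hm hinf hsum := by
    rw [List.cons_append, List.infix_cons_iff, ← List.cons_append] at hinf
    rcases hinf with ⟨r, hr⟩ | hinf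
    · rcases List.append_eq_append_iff.1 hr with ⟨a, ha, -⟩ | ⟨c, -, hcr⟩
      · refine absurd hsum (List.sum_pos _ (fun x hx ↦ ?_) hm).ne'
        exact List.forall_mem_cons.2 ⟨hp, h.pos⟩ x (ha ▸ List.mem_append_left a hx)
      · rcases eq_or_ne r [] with rfl | hr0
        · simpa using hr
        · have hrneg : 0 < (r.map Neg.neg).sum := by
            refine List.sum_pos _ (List.forall_mem_map.2 fun x hx ↦ ?_) (by simpa using hr0)
            exact neg_pos.2 (h.neg x (hcr ▸ List.mem_append_right c hx))
          have hsum_eq : m.sum + r.sum = p + ∑ x ∈ A, x := by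
            rw [← List.sum_append, hr, List.cons_append, List.sum_cons, h.sum_eq]
          rw [← List.sum_neg] at hrneg
          lia
    · have hwhole := h.noZeroSum m hm hinf hsum
      rcases hA with rfl | hA
      · exact absurd (hwhole.trans (List.toFinset_eq_empty_iff _ |>.1 h.toFinset)) hm
      · exact absurd (h.sum_eq.symm.trans (hwhole ▸ hsum)) hA

end IsSignSortedOrdering

theorem exists_pos_mem_erase_sum_ne_zero {A : Finset ℤ} (hne : A.Nonempty) (h0 : 0 ∉ A)
    (hsum : 0 ≤ ∑ x ∈ A, x) :
    ∃ p ∈ A, 0 < p ∧ (A.erase p = ∅ ∨ ∑ x ∈ A.erase p, x ≠ 0) := by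
  have hpos : ∀ B ⊆ A, B.Nonempty → 0 ≤ ∑ x ∈ B, x → ∃ p ∈ B, 0 < p := fun B hB hBne hBsum ↦ by
    by_contra! hcon
    refine hBsum.not_gt (sum_neg (fun x hx ↦ ?_) hBne)
    exact lt_of_le_of_ne (hcon x hx) fun hx0 ↦ h0 (hx0 ▸ hB hx)
  obtain ⟨p, hpA, hp⟩ := hpos A Subset.rfl hne hsum
  by_cases hgood : A.erase p = ∅ ∨ ∑ x ∈ A.erase p, x ≠ 0
  · exact ⟨p, hpA, hp, hgood⟩
  push Not at hgood
  obtain ⟨q, hqA, hq⟩ := hpos (A.erase p) (erase_subset p A)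
    (nonempty_iff_ne_empty.2 hgood.1.ne_empty) hgood.2.ge
  refine ⟨q, mem_of_mem_erase hqA, hq, Or.inr ?_⟩
  have hp_sum := add_sum_erase A id hpA
  have hq_sum := add_sum_erase A id (mem_of_mem_erase hqA)
  have hqp := ne_of_mem_erase hqA
  simp only [id] at hp_sum hq_sum
  lia

theorem exists_isSignSortedOrdering {A : Finset ℤ} (h0 : 0 ∉ A) :
    ∃ X Y, IsSignSortedOrdering A X Y := by
  induction hn : #A using Nat.strong_induction_on generalizing A with
  | _ n ih =>
  subst hn
  have hnonneg : ∀ B : Finset ℤ, #B = #A → 0 ∉ B → 0 ≤ ∑ x ∈ B, x →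
      ∃ X Y, IsSignSortedOrdering B X Y := fun B hBA hB0 hBsum ↦ by
    rcases B.eq_empty_or_nonempty with rfl | hBne
    · exact ⟨[], [], by simp, by simp, by simp, by simp, fun m _ hinf _ ↦ by simpa using hinf⟩
    obtain ⟨p, hpB, hp, hrest⟩ := exists_pos_mem_erase_sum_ne_zero hBne hB0 hBsum
    obtain ⟨X, Y, hXY⟩ := ih #(B.erase p) (hBA ▸ card_erase_lt_of_mem hpB)
      (fun h ↦ hB0 (mem_of_mem_erase h)) rfl
    refine ⟨p :: X, Y, insert_erase hpB ▸ hXY.cons hp (notMem_erase p B) ?_ hrest⟩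
    exact (add_sum_erase B id hpB).symm ▸ hBsum
  rcases le_total 0 (∑ x ∈ A, x) with hsum | hsum
  · exact hnonneg A rfl h0 hsum
  · obtain ⟨X, Y, hXY⟩ := hnonneg (A.map (Equiv.neg ℤ).toEmbedding) (card_map _) (by simpa using h0)
      (by simpa [sum_map, Finset.sum_neg_distrib fun x : ℤ ↦ x] using hsum)
    have hinv : (A.map (Equiv.neg ℤ).toEmbedding).map (Equiv.neg ℤ).toEmbedding = A := by
      ext; simp
    exact ⟨_, _, hinv ▸ hXY.neg_reverse⟩

theorem sequenceable_of_int {A : Finset ℤ} (h0 : 0 ∉ A) : Sequenceable A := by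
  obtain ⟨X, Y, hXY⟩ := exists_isSignSortedOrdering h0
  exact hXY.toFinset ▸ hXY.noZeroSum.sequenceable hXY.nodup

end Integers

section Rectification

variable {G : Type*} [AddCommGroup G]

/-- `ρ` is a Freiman-type isomorphism from the subset sums of `X` onto integer subset sums: two
subsets of `X` have equal sums exactly when their images under `ρ` do. -/
def Rectifies (ρ : G → ℤ) (X : Finset G) : Prop :=
  ∀ F ⊆ X, ∀ F' ⊆ X, ∑ x ∈ F, x = ∑ x ∈ F', x ↔ ∑ x ∈ F, ρ x = ∑ x ∈ F', ρ x

namespace Rectifies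

variable {ρ : G → ℤ} {X Y : Finset G}

theorem mono (h : Rectifies ρ X) (hYX : Y ⊆ X) : Rectifies ρ Y :=
  fun F hF F' hF' ↦ h F (hF.trans hYX) F' (hF'.trans hYX)

theorem neg (h : Rectifies ρ X) : Rectifies (-ρ) X := fun F hF F' hF' ↦ by
  simpa [sum_neg_distrib] using h F hF F' hF'

theorem sum_eq_sum_iff (h : Rectifies ρ X) {L L' : List G} (hL : L.Nodup) (hL' : L'.Nodup)
    (hX : ∀ x ∈ L, x ∈ X) (hX' : ∀ x ∈ L', x ∈ X) :
    L.sum = L'.sum ↔ (L.map ρ).sum = (L'.map ρ).sum := by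
  classical
  have hfin := h L.toFinset (fun x hx ↦ hX x (List.mem_toFinset.1 hx)) L'.toFinset
    (fun x hx ↦ hX' x (List.mem_toFinset.1 hx))
  simpa [List.sum_toFinset, hL, hL'] using hfin

theorem apply_ne_zero (h : Rectifies ρ X) (h0 : (0 : G) ∉ X) {x : G} (hx : x ∈ X) : ρ x ≠ 0 := by
  intro hρ
  have hx0 := (h {x} (by simpa using hx) ∅ (empty_subset X)).2 (by simpa using hρ)
  exact h0 ((by simpa using hx0 : x = 0) ▸ hx)

theorem injOn (h : Rectifies ρ X) : Set.InjOn ρ X := fun x hx y hy hxy ↦ by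
  simpa using (h {x} (by simpa using hx) {y} (by simpa using hy)).2 (by simpa using hxy)

theorem sequenceable [DecidableEq G] (h : Rectifies ρ X) (h0 : (0 : G) ∉ X) : Sequenceable X := by
  obtain ⟨l, hl, hlX, hdist, hzero⟩ := sequenceable_of_int (A := X.image ρ) fun hmem ↦ by
    obtain ⟨x, hx, hx0⟩ := mem_image.1 hmem
    exact h.apply_ne_zero h0 hx hx0
  have hmem : ∀ n ∈ l, ∃ x ∈ (X : Set G), ρ x = n := fun n hn ↦ by
    simpa using (hlX ▸ List.mem_toFinset.2 hn : n ∈ X.image ρ)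
  set L := l.map (Function.invFunOn ρ X) with hLdef
  have hLl : L.map ρ = l := by
    rw [hLdef, List.map_map]
    conv_rhs => rw [← l.map_id]
    exact List.map_congr_left fun n hn ↦ Function.invFunOn_eq (hmem n hn)
  have hLX : ∀ x ∈ L, x ∈ X := List.forall_mem_map.2 fun n hn ↦ Function.invFunOn_mem (hmem n hn)
  have hL : L.Nodup := List.Nodup.of_map ρ (hLl ▸ hl)
  have hlift : ∀ i j, (L.take i).sum = (L.take j).sum ↔ (l.take i).sum = (l.take j).sum :=
    fun i j ↦ by
      rw [h.sum_eq_sum_iff (hL.sublist (L.take_sublist i)) (hL.sublist (L.take_sublist j))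
        (fun x hx ↦ hLX x (List.mem_of_mem_take hx)) (fun x hx ↦ hLX x (List.mem_of_mem_take hx)),
        List.map_take, List.map_take, hLl]
  have hlen : L.length = l.length := List.length_map ..
  refine ⟨L, hL, eq_of_subset_of_card_le (fun x hx ↦ hLX x (List.mem_toFinset.1 hx)) ?_,
    fun i j hi hij hj ↦ (hlift i j).not.2 (hdist i j hi hij (hlen ▸ hj)),
    fun i hi hil ↦ (hlift i 0).not.2 (hzero i hi (hlen ▸ hil))⟩
  rw [List.toFinset_card_of_nodup hL, hlen, ← List.toFinset_card_of_nodup hl, hlX,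
    card_image_of_injOn h.injOn]

end Rectifies

variable {k : ℕ}

/- Subset sums of `X` are multiplied by the unit `u` and reduced to representatives too small to
wrap around modulo `k`. -/
theorem rectifies_of_isUnit {ρ : ZMod k → ℤ} {X : Finset (ZMod k)} {u : ZMod k} (hu : IsUnit u)
    (hρ : ∀ x ∈ X, (ρ x : ZMod k) = u * x) (hsmall : 2 * ∑ x ∈ X, |ρ x| < k) :
    Rectifies ρ X := by
  have hcast : ∀ F ⊆ X, ((∑ x ∈ F, ρ x : ℤ) : ZMod k) = u * ∑ x ∈ F, x := fun F hF ↦ by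
    rw [Int.cast_sum, mul_sum]
    exact sum_congr rfl fun x hx ↦ hρ x (hF hx)
  have habs : ∀ F ⊆ X, |∑ x ∈ F, ρ x| ≤ ∑ x ∈ X, |ρ x| := fun F hF ↦
    (abs_sum_le_sum_abs _ _).trans (sum_le_sum_of_subset_of_nonneg hF fun _ _ _ ↦ abs_nonneg _)
  refine fun F hF F' hF' ↦ ⟨fun hsum ↦ ?_, fun hsum ↦ hu.mul_left_cancel ?_⟩
  · have hdvd : (k : ℤ) ∣ ∑ x ∈ F, ρ x - ∑ x ∈ F', ρ x := by
      rw [← ZMod.intCast_zmod_eq_zero_iff_dvd, Int.cast_sub, hcast F hF, hcast F' hF', hsum,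
        sub_self]
    refine sub_eq_zero.1 (Int.eq_zero_of_abs_lt_dvd hdvd ?_)
    linarith [abs_sub (∑ x ∈ F, ρ x) (∑ x ∈ F', ρ x), habs F hF, habs F' hF']
  · rw [← hcast F hF, ← hcast F' hF', hsum]

theorem mul_abs_sub_le_of_div_eq_div {Q a b k : ℕ} (hk : 0 < k) (h : Q * a / k = Q * b / k) :
    Q * |(a : ℤ) - b| ≤ k := by
  wlog hab : b ≤ a generalizing a b
  · rw [abs_sub_comm]
    exact this h.symm (by lia)
  rw [abs_of_nonneg (by lia)]
  have ha := Nat.div_add_mod (Q * a) k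
  have hb := Nat.div_add_mod (Q * b) k
  have hlt := Nat.mod_lt (Q * a) hk
  rw [← h] at hb
  zify at ha hb hlt
  linarith [Int.emod_nonneg (Q * b : ℤ) (show (k : ℤ) ≠ 0 by lia)]

/- Simultaneous Dirichlet approximation; the multiplier is a unit because it is a positive integer
below the least prime factor of `k`. -/
theorem exists_isUnit_forall_mul_abs_le [NeZero k] {Q : ℕ} (hQ : 0 < Q) {B : Finset (ZMod k)}
    (hB : Q ^ #B < k.minFac) :
    ∃ u : ZMod k, IsUnit u ∧ ∃ r : ZMod k → ℤ, (∀ b, (r b : ZMod k) = u * b) ∧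
      ∀ b ∈ B, Q * |r b| ≤ k := by
  have hk : 0 < k := Nat.pos_of_neZero k
  let cell : Fin k.minFac → B → Fin Q := fun m b ↦ ⟨Q * (m.val * b.1 : ZMod k).val / k, by
    rw [Nat.div_lt_iff_lt_mul hk]
    exact Nat.mul_lt_mul_of_pos_left (ZMod.val_lt _) hQ⟩
  obtain ⟨m, n, hmn, hcell⟩ : ∃ m n, m < n ∧ cell m = cell n := by
    obtain ⟨m, n, hne, heq⟩ := Fintype.exists_ne_map_eq_of_card_lt cell (by simpa using hB)
    rcases lt_or_gt_of_ne hne with h | h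
    exacts [⟨m, n, h, heq⟩, ⟨n, m, h, heq.symm⟩]
  refine ⟨(n.val - m.val : ℕ),
    (ZMod.isUnit_iff_coprime _ _).2 (Nat.coprime_of_lt_minFac ?_ ?_).symm,
    fun b ↦ (n.val * b : ZMod k).val - (m.val * b : ZMod k).val, fun b ↦ ?_, fun b hb ↦ ?_⟩
  · exact Nat.sub_ne_zero_of_lt hmn
  · exact (Nat.sub_le _ _).trans_lt n.2
  · rw [Nat.cast_sub hmn.le]
    push_cast [ZMod.natCast_zmod_val]
    ring
  · exact mul_abs_sub_le_of_div_eq_div hk (congrArg Fin.val (congrFun hcell.symm ⟨b, hb⟩))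

theorem exists_rectifies [NeZero k] {n D Q : ℕ} {X : Finset (ZMod k)} (hX : #X ≤ n)
    (hdis : ∀ B ⊆ X, AddDissociated (B : Set (ZMod k)) → #B ≤ D) (hQ : 2 * n * D < Q)
    (hk : Q ^ D < k.minFac) : ∃ ρ : ZMod k → ℤ, Rectifies ρ X := by
  obtain ⟨B, -, hBD, hspan⟩ := exists_subset_addSpan_card_le_of_forall_addDissociated hdis
  have hQ0 : 0 < Q := by lia
  obtain ⟨u, hu, r, hr, hrB⟩ := exists_isUnit_forall_mul_abs_le (B := B) hQ0
    ((Nat.pow_le_pow_right hQ0 hBD).trans_lt hk)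
  have hcoeff : ∀ x ∈ X, ∃ ε : ZMod k → ℤ, (∀ b, |ε b| ≤ 1) ∧ ∑ b ∈ B, ε b • b = x := fun x hx ↦ by
    obtain ⟨ε, hε, hsum⟩ := mem_addSpan.1 (hspan hx)
    exact ⟨ε, fun b ↦ by rcases hε b with h | h | h <;> simp [h], hsum⟩
  choose! ε hε hsum using hcoeff
  refine ⟨fun x ↦ ∑ b ∈ B, ε x b * r b, rectifies_of_isUnit hu (fun x hx ↦ ?_) ?_⟩
  · conv_rhs => rw [← hsum x hx, mul_sum]
    push_cast [hr]
    exact sum_congr rfl fun b _ ↦ by rw [zsmul_eq_mul, mul_left_comm]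
  have hbound : ∀ x ∈ X, Q * |∑ b ∈ B, ε x b * r b| ≤ (D * k : ℤ) := fun x hx ↦
    calc Q * |∑ b ∈ B, ε x b * r b| ≤ Q * ∑ b ∈ B, |r b| := by
          gcongr
          refine (abs_sum_le_sum_abs _ _).trans (sum_le_sum fun b _ ↦ ?_)
          exact abs_mul (ε x b) _ ▸ mul_le_of_le_one_left (abs_nonneg _) (hε x hx b)
      _ ≤ ∑ _b ∈ B, (k : ℤ) := by rw [mul_sum]; exact sum_le_sum hrB
      _ ≤ D * k := by rw [sum_const, nsmul_eq_mul]; gcongr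
  have hkpos : (0 : ℤ) < k := by exact_mod_cast Nat.pos_of_neZero k
  refine lt_of_mul_lt_mul_left (a := (Q : ℤ)) ?_ (by positivity)
  calc (Q : ℤ) * (2 * ∑ x ∈ X, |∑ b ∈ B, ε x b * r b|)
      = 2 * ∑ x ∈ X, Q * |∑ b ∈ B, ε x b * r b| := by rw [mul_left_comm, mul_sum X]
    _ ≤ 2 * ∑ _x ∈ X, (D * k : ℤ) := by gcongr 2 * ?_; exact sum_le_sum hbound
    _ ≤ 2 * n * D * k := by rw [sum_const, nsmul_eq_mul, mul_assoc, mul_assoc]; gcongr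
    _ < Q * k := by gcongr; exact_mod_cast hQ

end Rectification

section Decomposition

variable {G : Type*} [AddCommGroup G]

theorem exists_pairwiseDisjoint_addDissociated [DecidableEq G] (A : Finset G) {R : ℕ}
    (hR : 0 < R) :
    ∃ 𝒟 : Finset (Finset G),
      (∀ D ∈ 𝒟, D ⊆ A ∧ #D = R ∧ AddDissociated (D : Set G)) ∧
      (𝒟 : Set (Finset G)).PairwiseDisjoint id ∧
      ∀ B ⊆ A \ 𝒟.biUnion id, AddDissociated (B : Set G) → #B < R := by
  classical
  let blocks := A.powerset.filter fun D ↦ #D = R ∧ AddDissociated (D : Set G)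
  obtain ⟨𝒟, h𝒟, hmax⟩ := exists_max_image
    (blocks.powerset.filter fun 𝒟 : Finset (Finset G) ↦
      (𝒟 : Set (Finset G)).PairwiseDisjoint id) card ⟨∅, by simp⟩
  obtain ⟨hblocks, hdisj⟩ := mem_filter.1 h𝒟
  rw [mem_powerset] at hblocks
  refine ⟨𝒟, fun D hD ↦ by simpa [blocks] using hblocks hD, hdisj, fun B hB hBdis ↦ ?_⟩
  by_contra! hRB
  obtain ⟨D, hDB, hDR⟩ := exists_subset_card_eq hRB
  have hDfree : ∀ C ∈ 𝒟, Disjoint D C := fun C hC ↦ by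
    refine disjoint_left.2 fun x hxD hxC ↦ (mem_sdiff.1 (hB (hDB hxD))).2 ?_
    exact mem_biUnion.2 ⟨C, hC, hxC⟩
  have hD𝒟 : D ∉ 𝒟 := fun h ↦ by
    have hempty := disjoint_self.1 (hDfree D h)
    exact hR.ne (by rw [← hDR, hempty, bot_eq_empty, card_empty])
  have hle := hmax (insert D 𝒟) (mem_filter.2 ⟨mem_powerset.2 (insert_subset ?_ hblocks), ?_⟩)
  · rw [card_insert_of_notMem hD𝒟] at hle
    lia
  · exact mem_filter.2 ⟨mem_powerset.2 (hDB.trans (hB.trans sdiff_subset)), hDR,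
      hBdis.subset (mod_cast hDB)⟩
  · rw [coe_insert]
    exact hdisj.insert fun C hC _ ↦ hDfree C hC

theorem dissociatedFamily_of_addDissociated {ι : Type*} {D : Finset G}
    (hD : AddDissociated (D : Set G)) (e : ι ≃ D) : DissociatedFamily fun i ↦ (e i : G) := by
  intro F F' h
  let f : ι ↪ G := e.toEmbedding.trans (Function.Embedding.subtype _)
  have hmem : ∀ F : Finset ι, (F.map f : Set G) ⊆ D := fun F x hx ↦ by
    obtain ⟨i, -, rfl⟩ := mem_map.1 (mem_coe.1 hx)
    exact (e i).2
  exact map_injective f (hD (hmem F) (hmem F') (by simpa only [sum_map] using! h))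

/-- The set `A` consists of a remainder `E`, without dissociated subsets as large as `ι`, and of
`s` pairwise disjoint dissociated blocks of size `|ι|`, which are enumerated by `d`. -/
structure IsBlockDecomposition {ι : Type*} [Fintype ι] [DecidableEq G] {s : ℕ} (A E : Finset G)
    (d : Fin s → ι → G) : Prop where
  dissociated : ∀ l, DissociatedFamily (d l)
  injective : Function.Injective fun p : Fin s × ι ↦ d p.1 p.2
  notMem : ∀ l t, d l t ∉ E
  union : E ∪ univ.image (fun p : Fin s × ι ↦ d p.1 p.2) = A
  card_lt : ∀ B ⊆ E, AddDissociated (B : Set G) → #B < Fintype.card ι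

theorem exists_isBlockDecomposition [DecidableEq G] (ι : Type*) [Fintype ι] [Nonempty ι]
    (A : Finset G) : ∃ (s : ℕ) (E : Finset G) (d : Fin s → ι → G), IsBlockDecomposition A E d := by
  obtain ⟨𝒟, h𝒟, hdisj, hrest⟩ :=
    exists_pairwiseDisjoint_addDissociated A (Fintype.card_pos (α := ι))
  let e : Fin #𝒟 ≃ 𝒟 := 𝒟.equivFin.symm
  let f : ∀ D : 𝒟, ι ≃ D.1 := fun D ↦
    Fintype.equivOfCardEq (by rw [Fintype.card_coe, (h𝒟 D.1 D.2).2.1])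
  refine ⟨#𝒟, A \ 𝒟.biUnion id, fun l t ↦ f (e l) t, fun l ↦ ?_, ?_, fun l t hmem ↦ ?_, ?_, hrest⟩
  · exact dissociatedFamily_of_addDissociated (h𝒟 _ (e l).2).2.2 (f (e l))
  · rintro ⟨l, t⟩ ⟨l', t'⟩ h
    have hl : l = l' := by
      refine e.injective (Subtype.ext ?_)
      by_contra hne
      exact disjoint_left.1 (hdisj (e l).2 (e l').2 hne) (f (e l) t).2
        (by simpa only [h, id] using (f (e l') t').2)
    subst hl
    simpa using h
  · exact (mem_sdiff.1 hmem).2 (mem_biUnion.2 ⟨_, (e l).2, (f (e l) t).2⟩)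
  · have himage : univ.image (fun p : Fin #𝒟 × ι ↦ (f (e p.1) p.2 : G)) = 𝒟.biUnion id := by
      ext x
      simp only [mem_image, mem_univ, true_and, Prod.exists, mem_biUnion, id]
      refine ⟨fun ⟨l, t, hx⟩ ↦ ⟨_, (e l).2, hx ▸ (f (e l) t).2⟩, fun ⟨D, hD, hx⟩ ↦ ?_⟩
      obtain ⟨l, hl⟩ := e.surjective ⟨D, hD⟩
      obtain ⟨t, ht⟩ := (f (e l)).surjective ⟨x, hl ▸ hx⟩
      exact ⟨l, t, congrArg Subtype.val ht⟩
    rw [himage]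
    exact sdiff_union_of_subset (biUnion_subset.2 fun D hD ↦ (h𝒟 D hD).1)

theorem IsBlockDecomposition.card_le_of_addDissociated {ι : Type*} [Fintype ι] [DecidableEq G]
    {s : ℕ} {A E : Finset G} {d : Fin s → ι → G} (h : IsBlockDecomposition A E d) {B : Finset G}
    (hBA : B ⊆ A) (hB : AddDissociated (B : Set G)) : #B ≤ (s + 1) * Fintype.card ι := by
  have hE : #(B ∩ E) < Fintype.card ι :=
    h.card_lt _ inter_subset_right (hB.subset (mod_cast inter_subset_left))
  have hblocks : #(B \ E) ≤ s * Fintype.card ι := by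
    have hsub : B \ E ⊆ univ.image (fun p : Fin s × ι ↦ d p.1 p.2) := by
      rw [sdiff_le_iff, sup_eq_union, h.union]
      exact hBA
    simpa using (card_le_card hsub).trans card_image_le
  have hsplit := card_inter_add_card_sdiff B E
  lia

end Decomposition

section AnchorOrdering

theorem exists_subset_card_eq_forall_le {α β : Type*} [DecidableEq α] [LinearOrder β] (f : α → β)
    {X : Finset α} {q : ℕ} (hq : q ≤ #X) :
    ∃ S ⊆ X, #S = q ∧ ∀ e ∈ S, ∀ x ∈ X \ S, f e ≤ f x := by
  induction q with
  | zero => exact ⟨∅, empty_subset X, card_empty, by simp⟩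
  | succ q ih =>
    obtain ⟨S, hSX, hS, hmin⟩ := ih (by lia)
    have hne : (X \ S).Nonempty := by
      rw [← card_pos, card_sdiff_of_subset hSX]
      lia
    obtain ⟨m, hm, hmmin⟩ := exists_min_image (X \ S) f hne
    obtain ⟨hmX, hmS⟩ := mem_sdiff.1 hm
    refine ⟨insert m S, insert_subset hmX hSX, by rw [card_insert_of_notMem hmS, hS], ?_⟩
    intro e he x hx
    have hxS : x ∈ X \ S := sdiff_subset_sdiff subset_rfl (subset_insert m S) hx
    rcases mem_insert.1 he with rfl | he
    exacts [hmmin x hxS, hmin e he x hxS]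

theorem nodup_toFinset_cons_append {α : Type*} [DecidableEq α] {S X : Finset α} (hSX : S ⊆ X)
    {e : α} (he : e ∈ S) {L : List α} (hL : L.Nodup) (hLS : L.toFinset = S.erase e) :
    (e :: ((X \ S).toList ++ L)).Nodup ∧ (e :: ((X \ S).toList ++ L)).toFinset = X := by
  have hmem : ∀ x ∈ L, x ∈ S.erase e := fun x hx ↦ hLS ▸ List.mem_toFinset.2 hx
  have hdisj : (X \ S).toList.Disjoint L := fun x hxB hxL ↦
    (mem_sdiff.1 (mem_toList.1 hxB)).2 (erase_subset e S (hmem x hxL))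
  refine ⟨List.nodup_cons.2 ⟨fun hmemL ↦ ?_, (nodup_toList _).append hL hdisj⟩, ?_⟩
  · rcases List.mem_append.1 hmemL with hmemB | hmemL
    · exact (mem_sdiff.1 (mem_toList.1 hmemB)).2 he
    · exact notMem_erase e S (hmem e hmemL)
  · rw [List.toFinset_cons, List.toFinset_append, hLS, toList_toFinset, ← union_insert,
      insert_erase he, sdiff_union_of_subset hSX]

variable {G : Type*} [AddCommGroup G]

theorem sum_list_of_toFinset_eq [DecidableEq G] {L : List G} (hL : L.Nodup) {X : Finset G}
    (hLX : L.toFinset = X) : L.sum = ∑ x ∈ X, x := by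
  simpa [hLX] using (List.sum_toFinset id hL).symm

theorem exists_ordering_forall_take_sum_ne [DecidableEq G] (X : Finset G) (f : G) :
    ∃ L : List G, L.Nodup ∧ L.toFinset = X ∧ ∀ i, 0 < i → i < L.length → (L.take i).sum ≠ f := by
  induction hX : #X generalizing X with
  | zero => exact ⟨[], by simp, by simp [card_eq_zero.1 hX], by simp⟩
  | succ m ih =>
    obtain ⟨y, hy, hyf⟩ : ∃ y ∈ X, m = 0 ∨ ∑ x ∈ X, x - y ≠ f := by
      rcases m.eq_zero_or_pos with hm | hm
      · obtain ⟨y, hy⟩ := card_pos.1 (by lia : 0 < #X)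
        exact ⟨y, hy, .inl hm⟩
      · obtain ⟨a, ha, b, hb, hab⟩ := one_lt_card.1 (by lia : 1 < #X)
        by_cases haf : ∑ x ∈ X, x - a = f
        · exact ⟨b, hb, .inr fun hbf ↦ hab (sub_right_injective (haf.trans hbf.symm))⟩
        · exact ⟨a, ha, .inr haf⟩
    have hcard : #(X.erase y) = m := by rw [card_erase_of_mem hy, hX, Nat.add_sub_cancel]
    obtain ⟨L, hL, hLX, hLf⟩ := ih (X.erase y) hcard
    have hyL : y ∉ L := fun h ↦ notMem_erase y X (hLX ▸ List.mem_toFinset.2 h)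
    have hlen : L.length = m := by rw [← List.toFinset_card_of_nodup hL, hLX, hcard]
    refine ⟨L ++ [y], ?_, ?_, fun i hi hilen ↦ ?_⟩
    · exact hL.append (List.nodup_singleton y) (by simpa using hyL)
    · rw [List.toFinset_append, hLX, List.toFinset_cons, List.toFinset_nil, union_insert,
        union_empty, insert_erase hy]
    · rw [List.length_append, List.length_singleton] at hilen
      rw [List.take_append_of_le_length (by lia)]
      rcases (Nat.lt_succ_iff.1 hilen).lt_or_eq with hi' | rfl
      · exact hLf i hi hi'
      · rw [List.take_length, sum_list_of_toFinset_eq hL hLX, sum_erase_eq_sub hy]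
        exact hyf.resolve_left (by lia)

theorem sum_Ico_take_sum_cons_append_le (e : G) (B L : List G) {w : G → ℕ} {M : ℕ}
    (hM : ∀ c, w c ≤ M) :
    ∑ i ∈ Ico 1 (e :: (B ++ L)).length, w ((e :: (B ++ L)).take i).sum ≤
      ∑ l ∈ range (B.length + 1), w (e + (B.take l).sum) + L.length * M := by
  calc ∑ i ∈ Ico 1 (e :: (B ++ L)).length, w ((e :: (B ++ L)).take i).sum
    _ ≤ ∑ i ∈ Ico 1 (B.length + 1 + L.length + 1), w ((e :: (B ++ L)).take i).sum :=
      sum_le_sum_of_subset (Ico_subset_Ico_right (by simp))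
    _ = ∑ l ∈ range (B.length + 1), w (e + ((B ++ L).take l).sum) +
        ∑ l ∈ range L.length, w (e + ((B ++ L).take (B.length + 1 + l)).sum) := by
      rw [sum_Ico_eq_sum_range, Nat.add_sub_cancel, sum_range_add]
      simp only [add_comm 1, List.take_succ_cons, List.sum_cons]
    _ ≤ ∑ l ∈ range (B.length + 1), w (e + (B.take l).sum) + L.length * M := by
      refine add_le_add (sum_le_sum fun l hl ↦ ?_) ?_
      · rw [List.take_append_of_le_length (mem_range_succ_iff.1 hl)]
      · simpa using sum_le_card_nsmul (range L.length) _ M fun l _ ↦ hM _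

theorem take_sum_cons_append_ne {e f : G} {B L : List G}
    (hB : ∀ l ≤ B.length, e + (B.take l).sum ≠ f)
    (hL : ∀ i, 0 < i → i < L.length → (L.take i).sum ≠ f - e - B.sum) {i : ℕ} (hi : 0 < i)
    (hilen : i < (e :: (B ++ L)).length) : ((e :: (B ++ L)).take i).sum ≠ f := by
  obtain ⟨l, rfl⟩ : ∃ l, i = l + 1 := ⟨i - 1, by lia⟩
  rw [List.take_succ_cons, List.sum_cons]
  rcases le_or_gt l B.length with hl | hl
  · rw [List.take_append_of_le_length hl]
    exact hB l hl
  · obtain ⟨j, rfl⟩ : ∃ j, l = B.length + j := ⟨l - B.length, by lia⟩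
    rw [List.take_length_add_append, List.sum_append]
    intro heq
    refine hL j (by lia) (by rw [List.length_cons, List.length_append] at hilen; lia) ?_
    rw [← heq]
    abel

theorem sum_map_take_add_le {α : Type*} {ρ : α → ℤ} {L : List α} (hρ : ∀ x ∈ L, 0 ≤ ρ x) {l l' : ℕ}
    (hl : l < l') (hl' : l' ≤ L.length) :
    ((L.take l).map ρ).sum + ρ L[l] ≤ ((L.take l').map ρ).sum := by
  obtain ⟨r, rfl⟩ : ∃ r, l' = l + (r + 1) := ⟨l' - l - 1, by lia⟩
  rw [List.take_add, List.drop_eq_getElem_cons (by lia), List.take_succ_cons, List.map_append,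
    List.sum_append, List.map_cons, List.sum_cons]
  have hrest : 0 ≤ (((L.drop (l + 1)).take r).map ρ).sum :=
    List.sum_nonneg <| List.forall_mem_map.2 fun x hx ↦
      hρ x (List.mem_of_mem_drop (List.mem_of_mem_take hx))
  exact add_le_add_right (le_add_of_nonneg_right hrest) _

namespace Rectifies

variable {ρ : G → ℤ} {X S : Finset G} {L : List G}

theorem take_sum_ne_take_sum (h : Rectifies ρ X) (hpos : ∀ x ∈ X, 0 < ρ x) (hL : L.Nodup)
    (hLX : ∀ x ∈ L, x ∈ X) {i j : ℕ} (hij : i < j) (hj : j ≤ L.length) :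
    (L.take i).sum ≠ (L.take j).sum := by
  rw [ne_eq, h.sum_eq_sum_iff (hL.sublist (L.take_sublist i)) (hL.sublist (L.take_sublist j))
    (fun x hx ↦ hLX x (List.mem_of_mem_take hx)) (fun x hx ↦ hLX x (List.mem_of_mem_take hx))]
  have hstep := sum_map_take_add_le (fun x hx ↦ (hpos x (hLX x hx)).le) hij hj
  linarith [hpos L[i] (hLX _ (List.getElem_mem _))]

theorem injOn_add_take_sum (h : Rectifies ρ X) (hpos : ∀ x ∈ X, 0 < ρ x) (hS : S ⊆ X)
    (hL : L.Nodup) (hLX : ∀ x ∈ L, x ∈ X) (hLS : ∀ x ∈ L, x ∉ S)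
    (hmin : ∀ e ∈ S, ∀ x ∈ L, ρ e ≤ ρ x) :
    Set.InjOn (fun p : G × ℕ ↦ p.1 + (L.take p.2).sum) (S ×ˢ range (L.length + 1)) := by
  have hlift : ∀ e ∈ S, ∀ e' ∈ S, ∀ l l', e + (L.take l).sum = e' + (L.take l').sum →
      ρ e + ((L.take l).map ρ).sum = ρ e' + ((L.take l').map ρ).sum := by
    have hnodup : ∀ e ∈ S, ∀ l, (e :: L.take l).Nodup := fun e he l ↦
      List.nodup_cons.2 ⟨fun hmem ↦ hLS e (List.mem_of_mem_take hmem) he,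
        hL.sublist (L.take_sublist l)⟩
    have hmem : ∀ e ∈ S, ∀ l, ∀ x ∈ e :: L.take l, x ∈ X := fun e he l ↦
      List.forall_mem_cons.2 ⟨hS he, fun x hx ↦ hLX x (List.mem_of_mem_take hx)⟩
    intro e he e' he' l l' heq
    simpa using (h.sum_eq_sum_iff (hnodup e he l) (hnodup e' he' l') (hmem e he l)
      (hmem e' he' l')).1 (by simpa using heq)
  have hlt : ∀ e ∈ S, ∀ e' ∈ S, ∀ l l', l < l' → l' ≤ L.length →
      e + (L.take l).sum ≠ e' + (L.take l').sum := by
    intro e he e' he' l l' hll' hl' heq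
    have hstep := sum_map_take_add_le (fun x hx ↦ (hpos x (hLX x hx)).le) hll' hl'
    linarith [hlift e he e' he' l l' heq, hmin e he L[l] (List.getElem_mem _), hpos e' (hS he')]
  rintro ⟨e, l⟩ ⟨he, hl⟩ ⟨e', l'⟩ ⟨he', hl'⟩ heq
  simp only [coe_range, Set.mem_Iio, Nat.lt_succ_iff] at hl hl'
  obtain hll' | rfl | hll' := lt_trichotomy l l'
  · exact absurd heq (hlt e he e' he' l l' hll' hl')
  · simpa using heq
  · exact absurd heq.symm (hlt e' he' e he l' l hll' hl)

theorem exists_mem_mul_sum_add_take_sum_le (h : Rectifies ρ X) (hpos : ∀ x ∈ X, 0 < ρ x)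
    (hS : S ⊆ X) (hSne : S.Nonempty) (hL : L.Nodup) (hLX : ∀ x ∈ L, x ∈ X) (hLS : ∀ x ∈ L, x ∉ S)
    (hmin : ∀ e ∈ S, ∀ x ∈ L, ρ e ≤ ρ x) {w : G → ℕ} {W : ℕ}
    (hW : ∀ C : Finset G, ∑ c ∈ C, w c ≤ W) :
    ∃ e ∈ S, #S * ∑ l ∈ range (L.length + 1), w (e + (L.take l).sum) ≤ W := by
  classical
  refine exists_le_of_sum_le hSne ?_
  rw [← mul_sum, sum_const, smul_eq_mul, ← sum_product',
    ← sum_image (f := w) (g := fun p : G × ℕ ↦ p.1 + (L.take p.2).sum)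
      (by exact_mod_cast h.injOn_add_take_sum hpos hS hL hLX hLS hmin)]
  gcongr
  exact hW _

variable [DecidableEq G]

/- The element `e` put first is one of the `q` smallest: by rectification the sums
`e + (B.take l).sum` over all `e` and `l` are then distinct, so their total weight is at most `2W`
and some `e` pays only a `q`-th of it. Giving `f` the extra weight `W` makes that `e` avoid `f`. -/
theorem exists_ordering_of_lt_card (h : Rectifies ρ X) (hpos : ∀ x ∈ X, 0 < ρ x) {w : G → ℕ}
    {q M W : ℕ} (hq : 2 < q) (hqX : q < #X) (hW0 : 0 < W) (hW : ∀ C : Finset G, ∑ c ∈ C, w c ≤ W)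
    (hM : ∀ c, w c ≤ M) (f : G) :
    ∃ L : List G, L.Nodup ∧ L.toFinset = X ∧
      (∀ i, 0 < i → i < L.length → (L.take i).sum ≠ f) ∧
      q * ∑ i ∈ Ico 1 L.length, w (L.take i).sum ≤ 2 * W + q ^ 2 * M := by
  obtain ⟨S, hSX, hSq, hmin⟩ := exists_subset_card_eq_forall_le ρ hqX.le
  set B := (X \ S).toList
  have hB : ∀ x ∈ B, x ∈ X \ S := fun x ↦ mem_toList.1
  let w' : G → ℕ := fun c ↦ w c + if c = f then W else 0
  have hw' : ∀ C : Finset G, ∑ c ∈ C, w' c ≤ 2 * W := fun C ↦ by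
    have hC := hW C
    rw [sum_add_distrib, sum_ite_eq']
    split_ifs <;> lia
  obtain ⟨e, he, hcost⟩ := h.exists_mem_mul_sum_add_take_sum_le hpos hSX (card_pos.1 (by lia))
    (nodup_toList _) (fun x hx ↦ (mem_sdiff.1 (hB x hx)).1)
    (fun x hx ↦ (mem_sdiff.1 (hB x hx)).2) (fun e he x hx ↦ hmin e he x (hB x hx)) hw'
  rw [hSq] at hcost
  obtain ⟨L, hL, hLS, hLf⟩ := exists_ordering_forall_take_sum_ne (S.erase e) (f - e - B.sum)
  have hlen : L.length ≤ q := by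
    rw [← List.toFinset_card_of_nodup hL, hLS, card_erase_of_mem he, hSq]
    lia
  obtain ⟨hnodup, hXL⟩ := nodup_toFinset_cons_append hSX he hL hLS
  refine ⟨e :: (B ++ L), hnodup, hXL, fun i ↦ take_sum_cons_append_ne (fun l hl heq ↦ ?_) hLf, ?_⟩
  · have hWle : W ≤ w' (e + (B.take l).sum) := by simp [w', heq]
    have hle := single_le_sum (f := fun l ↦ w' (e + (B.take l).sum)) (fun _ _ ↦ Nat.zero_le _)
      (mem_range_succ_iff.2 hl)
    nlinarith
  · calc q * ∑ i ∈ Ico 1 (e :: (B ++ L)).length, w ((e :: (B ++ L)).take i).sum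
      _ ≤ q * (∑ l ∈ range (B.length + 1), w' (e + (B.take l).sum) + q * M) := by
        gcongr
        refine (sum_Ico_take_sum_cons_append_le e B L hM).trans ?_
        gcongr
        exact Nat.le_add_right _ _
      _ ≤ 2 * W + q ^ 2 * M := by linarith

theorem exists_ordering_mul_sum_le (h : Rectifies ρ X) (hpos : ∀ x ∈ X, 0 < ρ x) {w : G → ℕ}
    {q M W : ℕ} (hq : 2 < q) (hW0 : 0 < W) (hW : ∀ C : Finset G, ∑ c ∈ C, w c ≤ W)
    (hM : ∀ c, w c ≤ M) (f : G) :
    ∃ L : List G, L.Nodup ∧ L.toFinset = X ∧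
      (∀ i, 0 < i → i < L.length → (L.take i).sum ≠ f) ∧
      q * ∑ i ∈ Ico 1 L.length, w (L.take i).sum ≤ 2 * W + q ^ 2 * M := by
  rcases lt_or_ge q #X with hqX | hqX
  · exact h.exists_ordering_of_lt_card hpos hq hqX hW0 hW hM f
  · obtain ⟨L, hL, hLX, hLf⟩ := exists_ordering_forall_take_sum_ne X f
    refine ⟨L, hL, hLX, hLf, ?_⟩
    have hlen : L.length ≤ q := by rwa [← List.toFinset_card_of_nodup hL, hLX]
    have hsum := sum_le_card_nsmul (Ico 1 L.length) _ M fun i _ ↦ hM (L.take i).sum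
    rw [Nat.card_Ico, smul_eq_mul] at hsum
    calc q * ∑ i ∈ Ico 1 L.length, w (L.take i).sum
      _ ≤ q * (q * M) := by
        gcongr
        exact hsum.trans (by gcongr; lia)
      _ ≤ 2 * W + q ^ 2 * M := by linarith

end Rectifies

end AnchorOrdering

section Arrangement

/-- The positions of the arrangement: side `c` starts with `n c` anchors, which are followed by
the `c`-halves, of length `h` each, of the blocks `0, …, r`. -/
abbrev Position (n : Bool → ℕ) (r h : ℕ) : Type :=
  Σ c : Bool, Fin (n c) ⊕ Fin (r + 1) × Fin h

namespace Position

variable {n : Bool → ℕ} {r h : ℕ}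

/-- The place of a position within its side: the anchors have first coordinate `0`, and block `l`
has first coordinate `l + 1`. -/
def key : Position n r h → ℕ × ℕ
  | ⟨_, .inl i⟩ => (0, i)
  | ⟨_, .inr (l, t)⟩ => (l + 1, t)

/-- The positions of side `c` whose key lies in `[a, b)`. -/
def run (c : Bool) (a b : ℕ × ℕ) : Finset (Position n r h) :=
  {z | z.1 = c ∧ toLex a ≤ toLex z.key ∧ toLex z.key < toLex b}

/-- The part of block `l` covered by a set of positions. -/
def blockPart (Z : Finset (Position n r h)) (l : Fin (r + 1)) : Finset (Bool × Fin h) :=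
  {t | ⟨t.1, .inr (l, t.2)⟩ ∈ Z}

/-- The interval `[lo, hi)` of the `c`-half of a block. -/
def segment (c : Bool) (lo hi : ℕ) : Finset (Bool × Fin h) :=
  {t | t.1 = c ∧ lo ≤ t.2.val ∧ t.2.val < hi}

theorem mem_run_inl {c c' : Bool} {a b : ℕ × ℕ} {i : Fin (n c')} :
    (⟨c', .inl i⟩ : Position n r h) ∈ run c a b ↔
      c' = c ∧ (a.1 = 0 ∧ a.2 ≤ i) ∧ (0 < b.1 ∨ b.1 = 0 ∧ i < b.2) := by
  rw [run, mem_filter_univ]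
  simp [key, Prod.Lex.le_iff, Prod.Lex.lt_iff, eq_comm (a := 0)]

theorem mem_run_inr {c c' : Bool} {a b : ℕ × ℕ} {l : Fin (r + 1)} {t : Fin h} :
    (⟨c', .inr (l, t)⟩ : Position n r h) ∈ run c a b ↔
      c' = c ∧ (a.1 < l + 1 ∨ a.1 = l + 1 ∧ a.2 ≤ t) ∧ (l + 1 < b.1 ∨ l + 1 = b.1 ∧ t < b.2) := by
  rw [run, mem_filter_univ]
  simp [key, Prod.Lex.le_iff, Prod.Lex.lt_iff]

theorem run_self (c : Bool) (a : ℕ × ℕ) : (run c a a : Finset (Position n r h)) = ∅ :=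
  filter_false_of_mem fun _ _ hz ↦ (hz.2.1.trans_lt hz.2.2).false

theorem segment_self (c : Bool) (x : ℕ) : (segment c x x : Finset (Bool × Fin h)) = ∅ :=
  filter_false_of_mem fun _ _ ht ↦ (ht.2.1.trans_lt ht.2.2).false

theorem card_segment (c : Bool) (lo : ℕ) {hi : ℕ} (hhi : hi ≤ h) :
    #(segment c lo hi : Finset (Bool × Fin h)) = hi - lo := by
  have hprod : (segment c lo hi : Finset (Bool × Fin h)) =
      {c} ×ˢ ({t | lo ≤ t.val ∧ t.val < hi} : Finset (Fin h)) := by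
    ext ⟨c', t⟩
    simp [segment, and_comm, eq_comm]
  have hval :
      ({t | lo ≤ t.val ∧ t.val < hi} : Finset (Fin h)).map Fin.valEmbedding = Ico lo hi := by
    ext m
    simp only [mem_map, mem_filter, mem_univ, true_and, Fin.valEmbedding_apply, mem_Ico]
    exact ⟨fun ⟨_, ht, hm⟩ ↦ hm ▸ ht, fun hm ↦ ⟨⟨m, hm.2.trans_le hhi⟩, hm, rfl⟩⟩
  rw [hprod, card_product, card_singleton, one_mul, ← card_map Fin.valEmbedding, hval,
    Nat.card_Ico]

theorem blockPart_mono {Z Z' : Finset (Position n r h)} (hZ : Z ⊆ Z') (l : Fin (r + 1)) :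
    blockPart Z l ⊆ blockPart Z' l :=
  fun t ↦ by simpa only [blockPart, mem_filter, mem_univ, true_and] using @hZ _

theorem card_blockPart_run_le (c : Bool) (a b : ℕ × ℕ) (l : Fin (r + 1)) :
    #(blockPart (run c a b : Finset (Position n r h)) l) ≤ h := by
  have hsub : blockPart (run c a b : Finset (Position n r h)) l ⊆ segment c 0 h := fun t ht ↦ by
    simp_all [blockPart, segment, mem_run_inr]
  simpa only [card_segment c 0 le_rfl, Nat.sub_zero] using card_le_card hsub

theorem sub_le_card_blockPart_run {c : Bool} {a b : ℕ × ℕ} {l : Fin (r + 1)} {lo hi : ℕ}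
    (hhi : hi ≤ h) (ha : a.1 < l + 1 ∨ a.1 = l + 1 ∧ a.2 ≤ lo)
    (hb : l + 1 < b.1 ∨ l + 1 = b.1 ∧ hi ≤ b.2) :
    hi - lo ≤ #(blockPart (run c a b : Finset (Position n r h)) l) := by
  rw [← card_segment c lo hhi]
  refine card_le_card fun t ht ↦ ?_
  simp only [segment, blockPart, mem_filter, mem_univ, true_and, mem_run_inr] at ht ⊢
  lia

variable {G : Type*} [AddCommGroup G] {L : Bool → List G} {d : Fin (r + 1) → Bool × Fin h → G}

/-- The element placed at a position, for anchors `L` and blocks `d`. -/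
def value (L : Bool → List G) (d : Fin (r + 1) → Bool × Fin h → G) :
    Position (fun c ↦ (L c).length) r h → G
  | ⟨c, .inl i⟩ => (L c).get i
  | ⟨c, .inr (l, t)⟩ => d l (c, t)

theorem sum_value (Z : Finset (Position (fun c ↦ (L c).length) r h)) :
    ∑ z ∈ Z, value L d z =
      ∑ c, ∑ i with ⟨c, .inl i⟩ ∈ Z, (L c).get i + ∑ l, ∑ t ∈ blockPart Z l, d l t := by
  have hblocks : ∑ l, ∑ t ∈ blockPart Z l, d l t =
      ∑ c, ∑ p : Fin (r + 1) × Fin h, if ⟨c, .inr p⟩ ∈ Z then d p.1 (c, p.2) else 0 := by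
    simp only [Fintype.sum_prod_type, blockPart, sum_filter]
    rw [sum_comm]
  rw [hblocks, ← sum_add_distrib, ← univ_inter Z, ← sum_ite_mem, Fintype.sum_sigma]
  refine sum_congr rfl fun c _ ↦ ?_
  rw [Fintype.sum_sum_type, sum_filter]
  simp only [univ_inter]
  rfl

theorem sum_run_anchor (c : Bool) {x y : ℕ} (hxy : x ≤ y) :
    ∑ z ∈ run c (0, x) (0, y), value L d z = ((L c).take y).sum - ((L c).take x).sum := by
  have hpart : ∀ l, blockPart (run c (0, x) (0, y) :
      Finset (Position (fun c ↦ (L c).length) r h)) l = ∅ := fun l ↦ by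
    simp [blockPart, mem_run_inr]
  rw [sum_value, Fintype.sum_eq_single c fun c' hc' ↦ by simp [mem_run_inl, hc'],
    Fintype.sum_eq_zero _ fun l ↦ by rw [hpart, sum_empty], add_zero]
  simpa [mem_run_inl] using sum_filter_eq_take_sum_sub_take_sum (L c).get hxy

theorem sum_run_block (c : Bool) (l : Fin (r + 1)) (x y : ℕ) :
    ∑ z ∈ run c (l + 1, x) (l + 1, y), value L d z = ∑ t ∈ segment c x y, d l t := by
  have hpart : ∀ l' ≠ l, blockPart (run c (l + 1, x) (l + 1, y) :
      Finset (Position (fun c ↦ (L c).length) r h)) l' = ∅ := fun l' hl' ↦ by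
    rw [blockPart, filter_eq_empty_iff]
    simp only [mem_run_inr]
    lia
  rw [sum_value, sum_eq_zero fun c' _ ↦ by simp [mem_run_inl], zero_add,
    Fintype.sum_eq_single l fun l' hl' ↦ by rw [hpart l' hl', sum_empty]]
  congr 1
  ext t
  simp [blockPart, mem_run_inr, segment]

theorem sum_run_add_sum_run (c : Bool) {a b e : ℕ × ℕ} (hab : toLex a ≤ toLex b)
    (hbe : toLex b ≤ toLex e) :
    ∑ z ∈ run c a b, value L d z + ∑ z ∈ run c b e, value L d z =
      ∑ z ∈ run c a e, value L d z := by
  rw [← sum_union]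
  · congr 1
    ext z
    simp only [run, mem_union, mem_filter, mem_univ, true_and]
    grind
  · exact disjoint_left.2 fun z ↦ by simp only [run, mem_filter]; grind

end Position

end Arrangement

section Deterministic

namespace Position

variable {n : Bool → ℕ} {r h T : ℕ}

/-- The key following `z.key`, so that `run c x.key y.nextKey` includes both `x` and `y`. -/
def nextKey (z : Position n r h) : ℕ × ℕ := (z.key.1, z.key.2 + 1)

theorem key_lt_nextKey_iff {y z : Position n r h} :
    toLex z.key < toLex y.nextKey ↔ toLex z.key ≤ toLex y.key := by
  simp only [nextKey, Prod.Lex.le_iff, Prod.Lex.lt_iff, ofLex_toLex]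
  lia

/-- The key of a position in the whole arrangement, where side `false` precedes side `true`. -/
def globalKey (z : Position n r h) : Bool ×ₗ (ℕ ×ₗ ℕ) := toLex (z.1, toLex z.key)

theorem globalKey_injective : Function.Injective (globalKey : Position n r h → _) := by
  rintro ⟨c, i | ⟨l, t⟩⟩ ⟨c', i' | ⟨l', t'⟩⟩ heq <;>
  · simp only [globalKey, key, toLex_inj, Prod.mk.injEq] at heq
    obtain ⟨rfl, heq⟩ := heq
    first
    | lia
    | grind

/-- The positions from `x` to `y`. -/
def interval (x y : Position n r h) : Finset (Position n r h) :=
  {z | x.globalKey ≤ z.globalKey ∧ z.globalKey ≤ y.globalKey}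

theorem interval_eq_run {x y : Position n r h} (hxy : x.1 = y.1) :
    interval x y = run x.1 x.key y.nextKey := by
  ext z
  simp only [interval, run, globalKey, mem_filter_univ, key_lt_nextKey_iff, Prod.Lex.le_iff,
    ofLex_toLex]
  grind

/-- A key that separates the positions of side `c` into two runs, each made of whole anchors and of
intervals of blocks. -/
def IsCut (n : Bool → ℕ) (r h : ℕ) (c : Bool) (a : ℕ × ℕ) : Prop :=
  a.1 = 0 ∧ a.2 ≤ n c ∨ 0 < a.1 ∧ a.1 ≤ r + 1 ∧ a.2 ≤ h

theorem isCut_key (z : Position n r h) : IsCut n r h z.1 z.key := by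
  rcases z with ⟨c, i | ⟨l, t⟩⟩ <;> simp only [IsCut, key] <;> lia

theorem isCut_nextKey (z : Position n r h) : IsCut n r h z.1 z.nextKey := by
  rcases z with ⟨c, i | ⟨l, t⟩⟩ <;> simp only [IsCut, key, nextKey] <;> lia

theorem IsCut.exists_eq_sub {c : Bool} {a : ℕ × ℕ} (ha : IsCut n r h c a) (hT : T ≤ h)
    (hsmall : ∀ l, #(blockPart (run c a (r + 1, h) : Finset (Position n r h)) l) < T) :
    ∃ u < T, a = (r + 1, h - u) := by
  have hlast : a.1 = r + 1 := by
    by_contra hne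
    have hfull := sub_le_card_blockPart_run (n := n) (c := c) (a := a) (b := (r + 1, h))
      (l := Fin.last r) (lo := 0) (hi := h) le_rfl (.inl (by grind [IsCut])) (.inr ⟨rfl, le_rfl⟩)
    exact absurd (hsmall (Fin.last r)) (by lia)
  have hlt := (sub_le_card_blockPart_run (n := n) (c := c) (a := a) (b := (r + 1, h))
    (l := Fin.last r) (hi := h) le_rfl (.inr ⟨hlast, le_rfl⟩) (.inr ⟨rfl, le_rfl⟩)).trans_lt
    (hsmall (Fin.last r))
  exact ⟨h - a.2, hlt, Prod.ext hlast (by grind [IsCut])⟩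

theorem IsCut.run_eq_or_exists_eq {c : Bool} {b : ℕ × ℕ} (hb : IsCut n r h c b) (hT : T ≤ h)
    (hsmall : ∀ l, #(blockPart (run c (0, 0) b : Finset (Position n r h)) l) < T) :
    (∃ i ≤ n c, (run c (0, 0) b : Finset (Position n r h)) = run c (0, 0) (0, i)) ∨
      ∃ v ∈ Ico 1 T, b = (1, v) := by
  obtain ⟨m, v⟩ := b
  rcases hb with ⟨rfl, hv⟩ | ⟨hm, -, hv⟩
  · exact .inl ⟨v, hv, rfl⟩
  obtain rfl : m = 1 := by
    by_contra hne
    have hfull := sub_le_card_blockPart_run (n := n) (r := r) (c := c) (a := (0, 0)) (b := (m, v))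
      (l := 0) (lo := 0) (hi := h) le_rfl (by simp) (.inl (by simp only [Fin.val_zero]; lia))
    exact absurd (hsmall 0) (by lia)
  have hlt := (sub_le_card_blockPart_run (n := n) (r := r) (c := c) (a := (0, 0)) (b := (1, v))
    (l := 0) (lo := 0) hv (by simp) (.inr ⟨rfl, le_rfl⟩)).trans_lt (hsmall 0)
  rcases v.eq_zero_or_pos with rfl | hv0
  · refine .inl ⟨n c, le_rfl, ?_⟩
    ext ⟨c', i | ⟨l, t⟩⟩
    · simp only [mem_run_inl]
      grind
    · simp only [mem_run_inr]
      lia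
  · exact .inr ⟨v, mem_Ico.2 ⟨hv0, hlt⟩, rfl⟩

theorem key_lt_end (z : Position n r h) : toLex z.key < toLex (r + 1, h) := by
  rcases z with ⟨c, i | ⟨l, t⟩⟩ <;> simp only [key, Prod.Lex.lt_iff, ofLex_toLex] <;> lia

theorem zero_le_key (z : Position n r h) : toLex (0, 0) ≤ toLex z.key := by
  simp only [Prod.Lex.le_iff, ofLex_toLex]
  lia

/-- The cyclic arc that starts at the cut `a` of side `c`, leaves that side through its end, and
stops at the cut `b` of the other side. -/
def arc (c : Bool) (a b : ℕ × ℕ) : Finset (Position n r h) :=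
  run c a (r + 1, h) ∪ run (!c) (0, 0) b

theorem mem_arc {c : Bool} {a b : ℕ × ℕ} {z : Position n r h} :
    z ∈ arc c a b ↔ z.1 = c ∧ toLex a ≤ toLex z.key ∨ z.1 = !c ∧ toLex z.key < toLex b := by
  simp only [arc, run, mem_union, mem_filter_univ, key_lt_end, zero_le_key, and_true, true_and]

theorem interval_eq_arc {x y : Position n r h} (hx : x.1 = false) (hy : y.1 = true) :
    interval x y = arc false x.key y.nextKey := by
  ext z
  simp only [interval, globalKey, mem_filter_univ, mem_arc, key_lt_nextKey_iff, Prod.Lex.le_iff,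
    ofLex_toLex, hx, hy]
  rcases z.1.eq_false_or_eq_true with hz | hz <;> simp [hz]

theorem compl_arc (c : Bool) (a b : ℕ × ℕ) :
    (arc c a b : Finset (Position n r h))ᶜ = arc (!c) b a := by
  ext z
  simp only [mem_compl, mem_arc]
  grind

theorem card_blockPart_compl (Z : Finset (Position n r h)) (l : Fin (r + 1)) :
    #(blockPart Zᶜ l) = 2 * h - #(blockPart Z l) := by
  have hcompl : blockPart Zᶜ l = (blockPart Z l)ᶜ := by
    ext t
    simp [blockPart]
  rw [hcompl, card_compl, Fintype.card_prod, Fintype.card_bool, Fintype.card_fin]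

theorem run_anchor_end (c : Bool) (v : ℕ) :
    (run c (0, n c) (1, v) : Finset (Position n r h)) = run c (1, 0) (1, v) := by
  ext ⟨c', i | ⟨l, t⟩⟩
  · simp only [mem_run_inl]
    grind
  · simp only [mem_run_inr]
    lia

theorem run_block_end (c : Bool) (l v : ℕ) :
    (run c (l + 1, h) (l + 2, v) : Finset (Position n r h)) = run c (l + 2, 0) (l + 2, v) := by
  ext ⟨c', i | ⟨l', t⟩⟩
  · simp only [mem_run_inl]
    lia
  · simp only [mem_run_inr]
    lia

theorem card_blockPart_arc_le (c : Bool) (a b : ℕ × ℕ) (l : Fin (r + 1)) :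
    #(blockPart (arc c a b : Finset (Position n r h)) l) ≤
      #(blockPart (run c a (r + 1, h) : Finset (Position n r h)) l) +
        #(blockPart (run (!c) (0, 0) b : Finset (Position n r h)) l) := by
  refine le_trans (card_le_card fun t ht ↦ ?_) (card_union_le _ _)
  simpa [blockPart, arc] using ht

/- A block almost filled by an arc meets both ends of it, so the arc contains a full half of every
other block. -/
theorem forall_card_blockPart_arc_lt_or (hT0 : 0 < T) (hT : T ≤ h) (c : Bool) (a b : ℕ × ℕ)
    (hpart : ∀ l, #(blockPart (arc c a b : Finset (Position n r h)) l) < T ∨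
      2 * h - T < #(blockPart (arc c a b : Finset (Position n r h)) l)) :
    (∀ l, #(blockPart (arc c a b : Finset (Position n r h)) l) < T) ∨
      ∀ l, #(blockPart (arc (!c) b a : Finset (Position n r h)) l) < T := by
  by_contra! hcon
  obtain ⟨⟨k, hk⟩, l, hl⟩ := hcon
  have hklarge := (hpart k).resolve_left hk.not_gt
  have hlsmall : #(blockPart (arc c a b : Finset (Position n r h)) l) < T := by
    rw [← compl_arc, card_blockPart_compl] at hl
    exact (hpart l).resolve_right (by lia)
  have hunion := card_blockPart_arc_le (n := n) (h := h) c a b k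
  have htail := card_blockPart_run_le (n := n) (h := h) c a (r + 1, h) k
  have hhead := card_blockPart_run_le (n := n) (h := h) (!c) (0, 0) b k
  obtain ⟨t, ht⟩ := card_pos.1 (by lia : 0 < #(blockPart (run c a (r + 1, h) :
    Finset (Position n r h)) k))
  obtain ⟨t', ht'⟩ := card_pos.1 (by lia : 0 < #(blockPart (run (!c) (0, 0) b :
    Finset (Position n r h)) k))
  simp only [blockPart, mem_filter_univ, mem_run_inr] at ht ht'
  have hlk : l ≠ k := by
    rintro rfl
    lia
  rcases lt_or_gt_of_ne (Fin.val_ne_of_ne hlk) with hlt | hlt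
  · have hfull := sub_le_card_blockPart_run (n := n) (c := !c) (a := (0, 0)) (b := b) (l := l)
      (lo := 0) (hi := h) le_rfl (.inl (by lia)) (.inl (by lia))
    have hle := card_le_card (blockPart_mono (subset_union_right (s₁ := run c a (r + 1, h))
      (s₂ := (run (!c) (0, 0) b : Finset (Position n r h)))) l)
    exact absurd hlsmall (by rw [arc]; lia)
  · have hfull := sub_le_card_blockPart_run (n := n) (c := c) (a := a) (b := (r + 1, h)) (l := l)
      (lo := 0) (hi := h) le_rfl (.inl (by lia)) (by simp only; lia)
    have hle := card_le_card (blockPart_mono (subset_union_left (s₁ := run c a (r + 1, h))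
      (s₂ := (run (!c) (0, 0) b : Finset (Position n r h)))) l)
    exact absurd hlsmall (by rw [arc]; lia)

end Position

end Deterministic

section ConflictFree

namespace Position

variable {r h T : ℕ} {G : Type*} [AddCommGroup G] {L : Bool → List G}
  {d : Fin (r + 1) → Bool × Fin h → G} {σ : G}

theorem sum_run_anchor_block (c : Bool) {i : ℕ} (hi : i ≤ (L c).length) (v : ℕ) :
    ∑ z ∈ run c (0, i) (1, v), value L d z =
      (L c).sum - ((L c).take i).sum + ∑ t ∈ segment c 0 v, d 0 t := by
  have hanchor : ∑ z ∈ run c (0, i) (0, (L c).length), value L d z =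
      (L c).sum - ((L c).take i).sum := by
    rw [sum_run_anchor c hi, List.take_length]
  have hblock : ∑ z ∈ run c (0, (L c).length) (1, v), value L d z = ∑ t ∈ segment c 0 v, d 0 t := by
    rw [run_anchor_end (n := fun c ↦ (L c).length), ← sum_run_block]
    rfl
  rw [← hanchor, ← hblock, sum_run_add_sum_run] <;> simp [Prod.Lex.le_iff, hi]

theorem sum_run_succ_block (c : Bool) {l l' : Fin (r + 1)} (hl : l'.val = l + 1) {x : ℕ}
    (hx : x ≤ h) (v : ℕ) :
    ∑ z ∈ run c (l + 1, x) (l' + 1, v), value L d z =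
      ∑ t ∈ segment c x h, d l t + ∑ t ∈ segment c 0 v, d l' t := by
  have hblock : ∑ z ∈ run c (l + 1, h) (l' + 1, v), value L d z =
      ∑ t ∈ segment c 0 v, d l' t := by
    rw [← sum_run_block, hl, run_block_end]
  rw [← sum_run_block, ← hblock, sum_run_add_sum_run] <;> simp [Prod.Lex.le_iff, hx, hl]

theorem sum_arc (c : Bool) (a b : ℕ × ℕ) :
    ∑ z ∈ arc c a b, value L d z =
      ∑ z ∈ run c a (r + 1, h), value L d z + ∑ z ∈ run (!c) (0, 0) b, value L d z := by
  refine sum_union (disjoint_left.2 fun z hz hz' ↦ ?_)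
  simp only [run, mem_filter_univ] at hz hz'
  exact Bool.not_ne_self c (hz'.1.symm.trans hz.1)

/-- The sum forbidden to an arc leaving side `c`. An arc leaving side `false` is an interval of the
arrangement, whose sum must not vanish. An arc leaving side `true` is the complement of an interval,
whose sum must differ from the total sum `σ`. -/
def wrapSum (σ : G) (c : Bool) : G := cond c σ 0

/-- A start of the first block `e`, of length less than `T`, completes a run that begins with
anchors to a run with a forbidden sum. -/
def HeadConflict (T : ℕ) (σ : G) (L : Bool → List G) (e : Bool × Fin h → G) : Prop :=
  ∃ c, ∃ v ∈ Ico 1 T,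
    (∃ i ∈ range (L c).length, ∑ t ∈ segment c 0 v, e t = ((L c).take i).sum - (L c).sum) ∨
      ∑ t ∈ segment c 0 v, e t = wrapSum σ (!c) - (L c).sum

/-- An end of the last block `e`, of length less than `T`, forms an arc with a forbidden sum
together with the first anchors of the other side. -/
def TailConflict (T : ℕ) (σ : G) (L : Bool → List G) (e : Bool × Fin h → G) : Prop :=
  ∃ c, ∃ u ∈ Ico 1 T, ∃ i ∈ range ((L !c).length + 1),
    ∑ t ∈ segment c (h - u) h, e t = wrapSum σ c - ((L !c).take i).sum

/-- An end of the block `e` and a start of the cyclically following block `e'`, both of length less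
than `T`, form a forbidden sum. Blocks on different sides can only be consecutive through all the
anchors of the second side. -/
def JunctionConflict (T : ℕ) (σ : G) (L : Bool → List G) (e e' : Bool × Fin h → G) : Prop :=
  ∃ c c', ∃ u ∈ Ico 1 T, ∃ v ∈ Ico 1 T,
    ∑ t ∈ segment c (h - u) h, e t + ∑ t ∈ segment c' 0 v, e' t =
      if c = c' then 0 else wrapSum σ c - (L c').sum

/-- The local conditions on an arrangement of total sum `σ`: all the intervals and complements of
intervals that meet every block in fewer than `T` positions have admissible sums. -/
structure ConflictFree (T : ℕ) (σ : G) (L : Bool → List G) (d : Fin (r + 1) → Bool × Fin h → G) :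
    Prop where
  take_sum_ne : ∀ c i j, i < j → j ≤ (L c).length → ((L c).take i).sum ≠ ((L c).take j).sum
  take_sum_ne_total : ∀ i, 0 < i → i ≤ (L false).length → ((L false).take i).sum ≠ σ
  dissociated : ∀ l, DissociatedFamily (d l)
  head : ¬HeadConflict T σ L (d 0)
  tail : ¬TailConflict T σ L (d (Fin.last r))
  junction : ∀ l, ¬JunctionConflict T σ L (d l) (d (l + 1))

namespace ConflictFree

theorem sum_run_anchor_block_ne_zero (H : ConflictFree T σ L d) (hT : T ≤ h) {c : Bool} {i v : ℕ}
    (hi : i < (L c).length) (hv0 : 0 < v) {l : Fin (r + 1)} (hv : v ≤ h)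
    (hsmall : ∀ k, #(blockPart (run c (0, i) (l + 1, v) :
      Finset (Position (fun c ↦ (L c).length) r h)) k) < T) :
    ∑ z ∈ run c (0, i) (l + 1, v), value L d z ≠ 0 := by
  obtain rfl : l = 0 := by
    by_contra hl
    have hfull := sub_le_card_blockPart_run (n := fun c ↦ (L c).length) (r := r) (c := c)
      (l := 0) (a := (0, i)) (b := (l + 1, v)) (lo := 0) (hi := h) le_rfl (by simp)
      (.inl (by simpa [Fin.pos_iff_ne_zero] using hl))
    exact absurd (hsmall 0) (by lia)
  have hvT := (sub_le_card_blockPart_run (c := c) (l := 0) (lo := 0) (a := (0, i)) hv (by simp)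
    (.inr ⟨rfl, le_rfl⟩)).trans_lt (hsmall 0)
  intro hzero
  refine H.head ⟨c, v, mem_Ico.2 ⟨hv0, by lia⟩, .inl ⟨i, mem_range.2 hi, ?_⟩⟩
  rw [Fin.val_zero, zero_add, sum_run_anchor_block c hi.le] at hzero
  rw [eq_neg_of_add_eq_zero_right hzero, neg_sub]

theorem sum_run_block_block_ne_zero (H : ConflictFree T σ L d) (hT : T ≤ h) {c : Bool}
    {l l' : Fin (r + 1)} {x v : ℕ} (hx : x < h) (hv0 : 0 < v) (hv : v ≤ h) (hl : l < l')
    (hsmall : ∀ k, #(blockPart (run c (l + 1, x) (l' + 1, v) :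
      Finset (Position (fun c ↦ (L c).length) r h)) k) < T) :
    ∑ z ∈ run c (l + 1, x) (l' + 1, v), value L d z ≠ 0 := by
  have hsucc : l'.val = l + 1 := by
    by_contra hne
    obtain ⟨k, hk⟩ : ∃ k : Fin (r + 1), k.val = l + 1 := ⟨⟨l + 1, by lia⟩, rfl⟩
    have hfull := sub_le_card_blockPart_run (n := fun c ↦ (L c).length) (c := c) (l := k)
      (a := (l + 1, x)) (b := (l' + 1, v)) (lo := 0) (hi := h) le_rfl
      (.inl (by simp only; lia)) (.inl (by simp only; lia))
    exact absurd (hsmall k) (by lia)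
  have hxT := (sub_le_card_blockPart_run (c := c) (a := (l + 1, x)) (b := (l' + 1, v))
    le_rfl (.inr ⟨rfl, le_rfl⟩) (.inl (by simp only; lia))).trans_lt (hsmall l)
  have hvT := (sub_le_card_blockPart_run (c := c) (l := l') (lo := 0) (a := (l + 1, x)) hv
    (.inl (by simp only; lia)) (.inr ⟨rfl, le_rfl⟩)).trans_lt (hsmall l')
  intro hzero
  have hadd : l + 1 = l' := Fin.ext (by rw [Fin.val_add_one_of_lt (hl.trans_le l'.le_last), hsucc])
  refine H.junction l ⟨c, c, h - x, mem_Ico.2 ⟨by lia, hxT⟩, v, mem_Ico.2 ⟨hv0, by lia⟩, ?_⟩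
  rw [if_pos rfl, hadd, Nat.sub_sub_self hx.le, ← sum_run_succ_block c hsucc hx.le, hzero]

theorem sum_run_ne_zero (H : ConflictFree T σ L d) (hT : T ≤ h)
    {x y : Position (fun c ↦ (L c).length) r h} (hside : x.1 = y.1)
    (hle : toLex x.key ≤ toLex y.key)
    (hsmall : ∀ l, #(blockPart (run x.1 x.key y.nextKey :
      Finset (Position (fun c ↦ (L c).length) r h)) l) < T) :
    ∑ z ∈ run x.1 x.key y.nextKey, value L d z ≠ 0 := by
  obtain ⟨c, x⟩ := x
  obtain ⟨c', y⟩ := y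
  obtain rfl : c = c' := hside
  rw [Prod.Lex.le_iff] at hle
  rcases x with i | ⟨l, t⟩ <;> rcases y with j | ⟨l', t'⟩ <;>
    simp only [key, nextKey, ofLex_toLex] at hle hsmall ⊢
  · rw [sum_run_anchor c (by lia)]
    exact sub_ne_zero.2 (H.take_sum_ne c i (j + 1) (by lia) j.isLt).symm
  · exact H.sum_run_anchor_block_ne_zero hT i.isLt t'.val.succ_pos t'.isLt hsmall
  · lia
  · rcases lt_or_ge l l' with hl | hl
    · exact H.sum_run_block_block_ne_zero hT t.isLt t'.val.succ_pos t'.isLt hl hsmall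
    · obtain rfl : l = l' := by lia
      rw [sum_run_block]
      refine (H.dissociated l).sum_ne_zero (card_pos.1 ?_)
      rw [card_segment c t.val t'.isLt]
      lia

theorem sum_arc_ne_wrapSum (H : ConflictFree T σ L d) (hT : T ≤ h) {c : Bool} {a b : ℕ × ℕ}
    (ha : IsCut (fun c ↦ (L c).length) r h c a) (hb : IsCut (fun c ↦ (L c).length) r h (!c) b)
    (hne : (arc c a b : Finset (Position (fun c ↦ (L c).length) r h)).Nonempty)
    (hc : c = true ∨ toLex a < toLex (r + 1, h))
    (hsmall : ∀ l, #(blockPart (arc c a b : Finset (Position (fun c ↦ (L c).length) r h)) l) < T) :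
    ∑ z ∈ arc c a b, value L d z ≠ wrapSum σ c := by
  obtain ⟨u, hu, rfl⟩ := ha.exists_eq_sub hT fun l ↦
    (card_le_card (blockPart_mono subset_union_left l)).trans_lt (hsmall l)
  have hhead := hb.run_eq_or_exists_eq hT fun l ↦
    (card_le_card (blockPart_mono subset_union_right l)).trans_lt (hsmall l)
  have htail := sum_run_block (L := L) (d := d) c (Fin.last r) (h - u) h
  rw [Fin.val_last] at htail
  rw [sum_arc, htail]
  rcases hhead with ⟨i, hi, hrun⟩ | ⟨v, hv, rfl⟩
  · rw [hrun, sum_run_anchor _ i.zero_le, List.take_zero, List.sum_nil, sub_zero]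
    rcases u.eq_zero_or_pos with rfl | hu0
    · obtain rfl : c = true := hc.resolve_right (by simp)
      rw [Nat.sub_zero, segment_self, sum_empty, zero_add]
      refine H.take_sum_ne_total i (Nat.pos_of_ne_zero ?_) hi
      rintro rfl
      rw [arc, hrun, Nat.sub_zero, run_self, run_self] at hne
      simp at hne
    · exact fun hsum ↦ H.tail ⟨c, u, mem_Ico.2 ⟨hu0, hu⟩, i, mem_range_succ_iff.2 hi,
        eq_sub_of_add_eq hsum⟩
  · rw [sum_run_anchor_block _ (Nat.zero_le _), List.take_zero, List.sum_nil, sub_zero]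
    intro hsum
    rcases u.eq_zero_or_pos with rfl | hu0
    · rw [Nat.sub_zero, segment_self, sum_empty, zero_add] at hsum
      exact H.head ⟨!c, v, hv, .inr (by rw [Bool.not_not, ← hsum, add_sub_cancel_left])⟩
    · refine H.junction (Fin.last r) ⟨c, !c, u, mem_Ico.2 ⟨hu0, hu⟩, v, hv, ?_⟩
      rw [if_neg (by simp), Fin.last_add_one, ← hsum]
      abel

theorem interval_eq_univ_of_sum_eq_zero (H : ConflictFree T σ L d) (hT0 : 0 < T) (hT : T ≤ h)
    (hσ : ∑ z, value L d z = σ) {x y : Position (fun c ↦ (L c).length) r h}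
    (hxy : x.globalKey ≤ y.globalKey)
    (hpart : ∀ l, #(blockPart (interval x y) l) < T ∨ 2 * h - T < #(blockPart (interval x y) l))
    (hzero : ∑ z ∈ interval x y, value L d z = 0) : interval x y = univ := by
  rcases (Prod.Lex.le_iff.1 hxy).symm with ⟨hside, hle⟩ | hlt
  · have hrun := interval_eq_run hside
    rw [hrun] at hpart hzero
    refine absurd hzero (H.sum_run_ne_zero hT hside hle fun l ↦ (hpart l).resolve_right ?_)
    exact not_lt.2 ((card_blockPart_run_le _ _ _ _).trans (by lia))
  · obtain ⟨hx, hy⟩ : x.1 = false ∧ y.1 = true := Bool.lt_iff.1 hlt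
    have hcutx : IsCut _ r h false x.key := hx ▸ isCut_key x
    have hcuty : IsCut _ r h true y.nextKey := hy ▸ isCut_nextKey y
    rw [interval_eq_arc hx hy] at hpart hzero ⊢
    rcases forall_card_blockPart_arc_lt_or hT0 hT _ _ _ hpart with hsmall | hsmall
    · exact absurd hzero (H.sum_arc_ne_wrapSum hT hcutx hcuty ⟨x, mem_arc.2 (.inl ⟨hx, le_rfl⟩)⟩
        (.inr x.key_lt_end) hsmall)
    · by_contra hne
      refine H.sum_arc_ne_wrapSum hT hcuty hcutx ?_ (.inl rfl) hsmall ?_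
      · rwa [← Bool.not_false, ← compl_arc, nonempty_iff_ne_empty, ne_eq, compl_eq_empty_iff]
      · rw [← Bool.not_false, ← compl_arc, ← hσ, ← sum_add_sum_compl (arc false x.key y.nextKey),
          hzero, zero_add]
        rfl

theorem sequenceable [DecidableEq G] (H : ConflictFree T σ L d) (hT0 : 0 < T) (hT : T ≤ h)
    (hσ : ∑ z, value L d z = σ) (hinj : Function.Injective (value L d))
    (hgeneric : ∀ x y l, T ≤ #(blockPart (interval x y) l) →
      #(blockPart (interval x y) l) ≤ 2 * h - T → ∑ z ∈ interval x y, value L d z ≠ 0) :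
    Sequenceable (univ.image (value L d)) := by
  refine sequenceable_image_univ_of_key globalKey_injective hinj fun x y hxy hzero z ↦ ?_
  have huniv := H.interval_eq_univ_of_sum_eq_zero hT0 hT hσ hxy
    (fun l ↦ by
      by_contra! hl
      exact hgeneric x y l hl.1 hl.2 hzero) hzero
  have hz : z ∈ interval x y := huniv ▸ mem_univ z
  simpa only [interval, mem_filter_univ] using hz

end ConflictFree

end Position

end ConflictFree

section RandomBlocks

theorem card_filter_exists_mem_le {α β : Type*} [Fintype α] (s : Finset β) (P : β → α → Prop)
    [∀ b, DecidablePred (P b)] {_ : DecidablePred fun x ↦ ∃ b ∈ s, P b x} :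
    #{x | ∃ b ∈ s, P b x} ≤ ∑ b ∈ s, #{x | P b x} := by
  classical
  exact (card_le_card fun x ↦ by simp).trans
    (card_biUnion_le (t := fun b ↦ ({x | P b x} : Finset α)))

theorem card_filter_exists_le {α β : Type*} [Fintype α] [Fintype β] (P : β → α → Prop)
    [∀ b, DecidablePred (P b)] {_ : DecidablePred fun x ↦ ∃ b, P b x} :
    #{x | ∃ b, P b x} ≤ ∑ b, #{x | P b x} := by
  classical
  exact (card_le_card fun x ↦ by simp).trans
    (card_biUnion_le (s := univ) (t := fun b ↦ ({x | P b x} : Finset α)))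

theorem card_filter_or_le {α : Type*} [Fintype α] (P Q : α → Prop) [DecidablePred P]
    [DecidablePred Q] {_ : DecidablePred fun x ↦ P x ∨ Q x} :
    #{x | P x ∨ Q x} ≤ #{x | P x} + #{x | Q x} := by
  classical
  exact (card_le_card fun x ↦ by simp).trans (card_union_le {x | P x} {x | Q x})

theorem mul_card_filter_exists_exists_le {α : Type*} [Fintype α] {T m N : ℕ}
    {P : Bool → Bool → ℕ → ℕ → α → Prop} [∀ c c' u v, DecidablePred (P c c' u v)]
    {_ : DecidablePred fun x ↦ ∃ c c', ∃ u ∈ Ico 1 T, ∃ v ∈ Ico 1 T, P c c' u v x}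
    (hP : ∀ c c', ∀ u ∈ Ico 1 T, ∀ v ∈ Ico 1 T, m * #{x | P c c' u v x} ≤ N) :
    m * #{x | ∃ c c', ∃ u ∈ Ico 1 T, ∃ v ∈ Ico 1 T, P c c' u v x} ≤ 4 * T ^ 2 * N := by
  classical
  have hunion : #{x | ∃ c c', ∃ u ∈ Ico 1 T, ∃ v ∈ Ico 1 T, P c c' u v x} ≤
      ∑ c, ∑ c', ∑ u ∈ Ico 1 T, ∑ v ∈ Ico 1 T, #{x | P c c' u v x} :=
    le_trans (card_filter_exists_le _) <| sum_le_sum fun c _ ↦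
      le_trans (card_filter_exists_le _) <| sum_le_sum fun c' _ ↦
        le_trans (card_filter_exists_mem_le _ _) <| sum_le_sum fun u _ ↦
          card_filter_exists_mem_le _ _
  calc _ ≤ m * ∑ c, ∑ c', ∑ u ∈ Ico 1 T, ∑ v ∈ Ico 1 T, #{x | P c c' u v x} := by gcongr
    _ ≤ ∑ _c : Bool, ∑ _c' : Bool, ∑ _u ∈ Ico 1 T, ∑ _v ∈ Ico 1 T, N := by
        simp only [mul_sum]
        gcongr with c _ c' _ u hu v hv
        exact hP c c' u hu v hv
    _ = 4 * (T - 1) ^ 2 * N := by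
        simp only [sum_const, card_univ, Fintype.card_bool, Nat.card_Ico, smul_eq_mul]
        ring
    _ ≤ _ := by gcongr; exact Nat.sub_le _ _

namespace Position

variable {r h T : ℕ} {G : Type*} [AddCommGroup G]

open scoped Classical in
theorem card_filter_headConflict_le (T : ℕ) (σ : G) (L : Bool → List G) (e : Bool × Fin h → G) :
    #{π : Equiv.Perm (Bool × Fin h) | HeadConflict T σ L (e ∘ π)} ≤
      ∑ c, (∑ i ∈ range (L c).length,
        hitWeight e (segment c 0) T (((L c).take i).sum - (L c).sum) +
          hitWeight e (segment c 0) T (wrapSum σ (!c) - (L c).sum)) := by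
  simp only [HeadConflict]
  refine le_trans (card_filter_exists_le _) (sum_le_sum fun c _ ↦ ?_)
  simp only [hitWeight]
  rw [sum_comm, ← sum_add_distrib]
  refine le_trans (card_filter_exists_mem_le _ _) (sum_le_sum fun v _ ↦ ?_)
  exact (card_filter_or_le _ _).trans (Nat.add_le_add_right (card_filter_exists_mem_le _ _) _)

open scoped Classical in
theorem card_filter_tailConflict_le (T : ℕ) (σ : G) (L : Bool → List G) (e : Bool × Fin h → G) :
    #{π : Equiv.Perm (Bool × Fin h) | TailConflict T σ L (e ∘ π)} ≤
      ∑ c, ∑ i ∈ range ((L !c).length + 1),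
        hitWeight e (fun u ↦ segment c (h - u) h) T (wrapSum σ c - ((L !c).take i).sum) := by
  simp only [TailConflict]
  refine le_trans (card_filter_exists_le _) (sum_le_sum fun c _ ↦ ?_)
  simp only [hitWeight]
  rw [sum_comm]
  exact le_trans (card_filter_exists_mem_le _ _)
    (sum_le_sum fun u _ ↦ card_filter_exists_mem_le _ _)

open scoped Classical in
theorem two_mul_mul_card_filter_sum_segment_le {e : Bool × Fin h → G} (he : DissociatedFamily e)
    (c : Bool) {lo hi : ℕ} (hlo : lo < hi) (hhi : hi ≤ h) (x : G) :
    2 * h * #{π : Equiv.Perm (Bool × Fin h) | ∑ t ∈ segment c lo hi, (e ∘ π) t = x} ≤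
      Fintype.card (Equiv.Perm (Bool × Fin h)) := by
  have hcard := card_segment (h := h) c lo hhi
  have hle := he.card_mul_hitCount_le (I := segment c lo hi) (card_pos.1 (by lia))
    (by simp only [hcard, Fintype.card_prod, Fintype.card_bool, Fintype.card_fin]; lia) x
  rw [← Fintype.card_perm, Fintype.card_prod, Fintype.card_bool, Fintype.card_fin] at hle
  exact hle

open scoped Classical in
theorem eight_mul_card_filter_junctionConflict_left_le {e : Bool × Fin h → G}
    (he : DissociatedFamily e) (hT0 : 0 < T) (hT : 16 * T ^ 2 ≤ h) (σ : G) (L : Bool → List G)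
    (e' : Bool × Fin h → G) :
    8 * #{π : Equiv.Perm (Bool × Fin h) | JunctionConflict T σ L (e ∘ π) e'} ≤
      Fintype.card (Equiv.Perm (Bool × Fin h)) := by
  have hle : 2 * h * #{π : Equiv.Perm (Bool × Fin h) | JunctionConflict T σ L (e ∘ π) e'} ≤
      4 * T ^ 2 * Fintype.card (Equiv.Perm (Bool × Fin h)) := by
    refine mul_card_filter_exists_exists_le fun c c' u hu v _ ↦ ?_
    have hh : 0 < h := lt_of_lt_of_le (by positivity) hT
    have hu0 := (mem_Ico.1 hu).1
    simp_rw [← eq_sub_iff_add_eq]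
    exact two_mul_mul_card_filter_sum_segment_le he c (by lia) le_rfl _
  refine Nat.le_of_mul_le_mul_left (le_trans ?_ hle) (by positivity : 0 < 4 * T ^ 2)
  rw [← mul_assoc]
  exact Nat.mul_le_mul_right _ (by lia)

open scoped Classical in
theorem eight_mul_card_filter_junctionConflict_right_le {e' : Bool × Fin h → G}
    (he' : DissociatedFamily e') (hT0 : 0 < T) (hT : 16 * T ^ 2 ≤ h) (σ : G) (L : Bool → List G)
    (e : Bool × Fin h → G) :
    8 * #{π : Equiv.Perm (Bool × Fin h) | JunctionConflict T σ L e (e' ∘ π)} ≤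
      Fintype.card (Equiv.Perm (Bool × Fin h)) := by
  have hle : 2 * h * #{π : Equiv.Perm (Bool × Fin h) | JunctionConflict T σ L e (e' ∘ π)} ≤
      4 * T ^ 2 * Fintype.card (Equiv.Perm (Bool × Fin h)) := by
    refine mul_card_filter_exists_exists_le fun c c' u _ v hv ↦ ?_
    obtain ⟨hv0, hvT⟩ := mem_Ico.1 hv
    simp_rw [← eq_sub_iff_add_eq']
    exact two_mul_mul_card_filter_sum_segment_le he' c' hv0 (by nlinarith) _
  refine Nat.le_of_mul_le_mul_left (le_trans ?_ hle) (by positivity : 0 < 4 * T ^ 2)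
  rw [← mul_assoc]
  exact Nat.mul_le_mul_right _ (by lia)

end Position

end RandomBlocks

section RandomArrangement

namespace Position

variable {r h T : ℕ} {G : Type*} [AddCommGroup G] {σ : G} {L : Bool → List G}
  {d : Fin (r + 1) → Bool × Fin h → G}

open scoped Classical in
theorem two_pow_mul_card_filter_sum_value_eq_zero_le
    {Z : Finset (Position (fun c ↦ (L c).length) r h)} {l : Fin (r + 1)}
    (hd : DissociatedFamily (d l)) (hlow : T ≤ #(blockPart Z l))
    (hhigh : #(blockPart Z l) ≤ 2 * h - T) (ω : Fin (r + 1) → Equiv.Perm (Bool × Fin h)) :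
    2 ^ T * #{π | ∑ z ∈ Z, value L (fun k ↦ d k ∘ Function.update ω l π k) z = 0} ≤
      Fintype.card (Equiv.Perm (Bool × Fin h)) := by
  obtain ⟨x, hx⟩ : ∃ x, ∀ π, ∑ z ∈ Z, value L (fun k ↦ d k ∘ Function.update ω l π k) z =
      ∑ t ∈ blockPart Z l, d l (π t) + x := by
    refine ⟨∑ c, ∑ i with ⟨c, .inl i⟩ ∈ Z, (L c).get i +
      ∑ k ∈ univ.erase l, ∑ t ∈ blockPart Z k, d k (ω k t), fun π ↦ ?_⟩
    have hothers : ∀ k ∈ univ.erase l, ∑ t ∈ blockPart Z k, (d k ∘ Function.update ω l π k) t =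
        ∑ t ∈ blockPart Z k, d k (ω k t) := fun k hk ↦ by
      rw [Function.update_of_ne (ne_of_mem_erase hk)]
      rfl
    rw [sum_value, ← add_sum_erase univ _ (mem_univ l), sum_congr rfl hothers,
      Function.update_self, add_left_comm]
    rfl
  have hbound := hd.two_pow_mul_hitCount_le (I := blockPart Z l) hlow
    (by simp only [Fintype.card_prod, Fintype.card_bool, Fintype.card_fin]; lia) (-x)
  simpa only [hx, hitCount, Fintype.card_perm, add_eq_zero_iff_eq_neg] using hbound

/-- The constraints on the order of block `l` alone. -/
def EndConflict (T : ℕ) (σ : G) (L : Bool → List G) (d : Fin (r + 1) → Bool × Fin h → G)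
    (l : Fin (r + 1)) (π : Equiv.Perm (Bool × Fin h)) : Prop :=
  l = 0 ∧ HeadConflict T σ L (d l ∘ π) ∨ l = Fin.last r ∧ TailConflict T σ L (d l ∘ π)

/-- The constraints on the orders of the cyclically consecutive blocks `l` and `l'`. -/
def AdjacentConflict (T : ℕ) (σ : G) (L : Bool → List G) (d : Fin (r + 1) → Bool × Fin h → G)
    (l l' : Fin (r + 1)) (π π' : Equiv.Perm (Bool × Fin h)) : Prop :=
  l' = l + 1 ∧ JunctionConflict T σ L (d l ∘ π) (d l' ∘ π')

theorem conflictsAt_imp {l : Fin (r + 1)} {ω : Fin (r + 1) → Equiv.Perm (Bool × Fin h)}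
    {π : Equiv.Perm (Bool × Fin h)}
    (hπ : ConflictsAt (EndConflict T σ L d) (AdjacentConflict T σ L d) l ω π) :
    (HeadConflict T σ L (d 0 ∘ π) ∨ TailConflict T σ L (d (Fin.last r) ∘ π)) ∨
      JunctionConflict T σ L (d l ∘ π) (d (l + 1) ∘ ω (l + 1)) ∨
        JunctionConflict T σ L (d (l - 1) ∘ ω (l - 1)) (d l ∘ π) := by
  rcases hπ with (⟨rfl, hπ⟩ | ⟨rfl, hπ⟩) | ⟨l', -, ⟨rfl, hπ⟩ | ⟨rfl, hπ⟩⟩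
  · exact .inl (.inl hπ)
  · exact .inl (.inr hπ)
  · exact .inr (.inl hπ)
  · exact .inr (.inr (by rwa [add_sub_cancel_right]))

open scoped Classical in
theorem two_mul_card_filter_conflictsAt_le (hd : ∀ l, DissociatedFamily (d l)) (hT0 : 0 < T)
    (hT : 16 * T ^ 2 ≤ h)
    (hhead : 8 * #{π : Equiv.Perm (Bool × Fin h) | HeadConflict T σ L (d 0 ∘ π)} ≤
      Fintype.card (Equiv.Perm (Bool × Fin h)))
    (htail : 8 * #{π : Equiv.Perm (Bool × Fin h) | TailConflict T σ L (d (Fin.last r) ∘ π)} ≤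
      Fintype.card (Equiv.Perm (Bool × Fin h)))
    (l : Fin (r + 1)) (ω : Fin (r + 1) → Equiv.Perm (Bool × Fin h)) :
    2 * #{π | ConflictsAt (EndConflict T σ L d) (AdjacentConflict T σ L d) l ω π} ≤
      Fintype.card (Equiv.Perm (Bool × Fin h)) := by
  have hleft := eight_mul_card_filter_junctionConflict_left_le (hd l) hT0 hT σ L
    (d (l + 1) ∘ ω (l + 1))
  have hright := eight_mul_card_filter_junctionConflict_right_le (hd l) hT0 hT σ L
    (d (l - 1) ∘ ω (l - 1))
  have hunion : #{π | ConflictsAt (EndConflict T σ L d) (AdjacentConflict T σ L d) l ω π} ≤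
      (#{π : Equiv.Perm (Bool × Fin h) | HeadConflict T σ L (d 0 ∘ π)} +
        #{π : Equiv.Perm (Bool × Fin h) | TailConflict T σ L (d (Fin.last r) ∘ π)}) +
      (#{π : Equiv.Perm (Bool × Fin h) |
          JunctionConflict T σ L (d l ∘ π) (d (l + 1) ∘ ω (l + 1))} +
        #{π : Equiv.Perm (Bool × Fin h) |
          JunctionConflict T σ L (d (l - 1) ∘ ω (l - 1)) (d l ∘ π)}) :=
    le_trans (card_le_card (monotone_filter_right _ fun π _ ↦ conflictsAt_imp)) <|
      le_trans (card_filter_or_le _ _) <|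
        add_le_add (card_filter_or_le _ _) (card_filter_or_le _ _)
  lia

theorem conflictFree_of_avoidsOn (hr : 0 < r) (hd : ∀ l, DissociatedFamily (d l))
    (hne : ∀ c i j, i < j → j ≤ (L c).length → ((L c).take i).sum ≠ ((L c).take j).sum)
    (hσ : ∀ i, 0 < i → i ≤ (L false).length → ((L false).take i).sum ≠ σ)
    {ω : Fin (r + 1) → Equiv.Perm (Bool × Fin h)}
    (hω : AvoidsOn (EndConflict T σ L d) (AdjacentConflict T σ L d) univ ω) :
    ConflictFree T σ L fun l ↦ d l ∘ ω l where
  take_sum_ne := hne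
  take_sum_ne_total := hσ
  dissociated l := (hd l).comp_perm (ω l)
  head hhead := hω.1 0 (mem_univ _) (.inl ⟨rfl, hhead⟩)
  tail htail := hω.1 (Fin.last r) (mem_univ _) (.inr ⟨rfl, htail⟩)
  junction l hl := by
    have hsucc : l ≠ l + 1 := by
      obtain ⟨r, rfl⟩ := Nat.exists_eq_add_one.2 hr
      simp
    exact hω.2 l (mem_univ _) (l + 1) (mem_univ _) hsucc ⟨rfl, hl⟩

end Position

/-- A splitting of `E` into two ordered sides, whose intervals and whose initial segments on side
`false` have the sums that `Position.ConflictFree` requires of the anchors. -/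
structure IsAnchoring {G : Type*} [AddCommGroup G] [DecidableEq G] (E : Finset G) (σ : G)
    (L : Bool → List G) : Prop where
  nodup : (L false ++ L true).Nodup
  toFinset_eq : (L false ++ L true).toFinset = E
  take_sum_ne : ∀ c i j, i < j → j ≤ (L c).length → ((L c).take i).sum ≠ ((L c).take j).sum
  take_sum_ne_total : ∀ i, 0 < i → i ≤ (L false).length → ((L false).take i).sum ≠ σ

namespace IsBlockDecomposition

open Position

theorem comp_perm {ι G : Type*} [Fintype ι] [AddCommGroup G] [DecidableEq G] {s : ℕ}
    {A E : Finset G} {d : Fin s → ι → G} (H : IsBlockDecomposition A E d)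
    (ω : Fin s → Equiv.Perm ι) : IsBlockDecomposition A E fun l ↦ d l ∘ ω l where
  dissociated l := (H.dissociated l).comp_perm (ω l)
  injective := H.injective.comp (Equiv.prodShear (Equiv.refl _) ω).injective
  notMem l t := H.notMem l (ω l t)
  union := by
    rw [← H.union]
    congr 1
    ext x
    simp only [mem_image, mem_univ, true_and]
    exact (Equiv.prodShear (Equiv.refl _) ω).exists_congr fun _ ↦ Iff.rfl
  card_lt := H.card_lt

variable {r h T : ℕ} {G : Type*} [AddCommGroup G] [DecidableEq G] {A E : Finset G}
  {L : Bool → List G} {d : Fin (r + 1) → Bool × Fin h → G}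

theorem value_injective (H : IsBlockDecomposition A E d) (hnodup : (L false ++ L true).Nodup)
    (hE : (L false ++ L true).toFinset = E) : Function.Injective (value L d) := by
  obtain ⟨hfalse, htrue, hdisj⟩ := List.nodup_append'.1 hnodup
  have hget : ∀ c i l t, (L c).get i ≠ d l t := fun c i l t hval ↦ H.notMem l t <| by
    have hmem : d l t ∈ L c := hval ▸ List.get_mem _ _
    rw [← hE, List.mem_toFinset, List.mem_append]
    cases c
    exacts [.inl hmem, .inr hmem]
  rintro ⟨c, i | ⟨l, t⟩⟩ ⟨c', i' | ⟨l', t'⟩⟩ hval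
  · cases c <;> cases c'
    · rw [hfalse.injective_get hval]
    · exact (hdisj (List.get_mem _ i) ((show (L false).get i = (L true).get i' from hval) ▸
        List.get_mem _ i')).elim
    · exact (hdisj (List.get_mem _ i') ((show (L true).get i = (L false).get i' from hval) ▸
        List.get_mem _ i)).elim
    · rw [htrue.injective_get hval]
  · exact (hget _ _ _ _ hval).elim
  · exact (hget _ _ _ _ hval.symm).elim
  · have heq := @H.injective (l, c, t) (l', c', t') hval
    simp only [Prod.mk.injEq] at heq
    obtain ⟨rfl, rfl, rfl⟩ := heq
    rfl

theorem image_value (H : IsBlockDecomposition A E d) (hE : (L false ++ L true).toFinset = E) :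
    univ.image (value L d) = A := by
  ext x
  rw [← H.union, ← hE, List.toFinset_append]
  simp only [mem_image, mem_univ, true_and, mem_union, List.mem_toFinset,
    List.mem_iff_get, Sigma.exists, Sum.exists, Prod.exists, Bool.exists_bool, value, exists_or]

open scoped Classical in
theorem sequenceable_of_isAnchoring (H : IsBlockDecomposition A E d) (hr : 0 < r)
    (hL : IsAnchoring E (∑ x ∈ A, x) L) (hT0 : 0 < T) (hT : 16 * T ^ 2 ≤ h)
    (hA : 2 * #A ^ 2 < 2 ^ T)
    (hhead : 8 * #{π : Equiv.Perm (Bool × Fin h) | HeadConflict T (∑ x ∈ A, x) L (d 0 ∘ π)} ≤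
      Fintype.card (Equiv.Perm (Bool × Fin h)))
    (htail : 8 * #{π : Equiv.Perm (Bool × Fin h) |
        TailConflict T (∑ x ∈ A, x) L (d (Fin.last r) ∘ π)} ≤
      Fintype.card (Equiv.Perm (Bool × Fin h))) :
    Sequenceable A := by
  have hinj (ω : Fin (r + 1) → Equiv.Perm (Bool × Fin h)) :=
    (H.comp_perm ω).value_injective hL.nodup hL.toFinset_eq
  have himage (ω : Fin (r + 1) → Equiv.Perm (Bool × Fin h)) :=
    (H.comp_perm ω).image_value hL.toFinset_eq
  let mixed : Finset (Position (fun c ↦ (L c).length) r h × Position (fun c ↦ (L c).length) r h) :=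
    {e | ∃ l, T ≤ #(blockPart (interval e.1 e.2) l) ∧ #(blockPart (interval e.1 e.2) l) ≤ 2 * h - T}
  have hmixed : #mixed ≤ #A ^ 2 := by
    refine (card_le_univ _).trans_eq ?_
    rw [Fintype.card_prod, ← himage 1, card_image_of_injective _ (hinj 1), card_univ, sq]
  obtain ⟨ω, hω, hgeneric⟩ := exists_avoidsOn_forall_not_event (K := mixed) (M := 2 ^ T)
    (event := fun e (ω : Fin (r + 1) → Equiv.Perm (Bool × Fin h)) ↦
      ∑ z ∈ interval e.1 e.2, value L (fun l ↦ d l ∘ ω l) z = 0)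
    (two_mul_card_filter_conflictsAt_le H.dissociated hT0 hT hhead htail)
    (fun e he ↦ by
      obtain ⟨l, hlow, hhigh⟩ := (mem_filter.1 he).2
      exact ⟨l, two_pow_mul_card_filter_sum_value_eq_zero_le (H.dissociated l) hlow hhigh⟩)
    (by lia)
  rw [← himage ω]
  refine (conflictFree_of_avoidsOn hr H.dissociated hL.take_sum_ne hL.take_sum_ne_total
    hω).sequenceable hT0 (by nlinarith) ?_ (hinj ω) fun x y l hlow hhigh ↦
      hgeneric (x, y) (mem_filter.2 ⟨mem_univ _, l, hlow, hhigh⟩)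
  rw [← himage ω, sum_image (hinj ω).injOn]

end IsBlockDecomposition

end RandomArrangement

section Anchors

namespace Position

variable {h T : ℕ} {G : Type*} [AddCommGroup G]

/-- The expected number, scaled by the number of permutations, of conflicts of the first block `e`
and the last block `e'` with a partial sum `x` of the anchors of side `c`, whose total is `y`. -/
noncomputable def anchorCost (T : ℕ) (σ : G) (e e' : Bool × Fin h → G) (c : Bool) (y x : G) : ℕ :=
  hitWeight e (segment c 0) T (x - y) +
    hitWeight e' (fun u ↦ segment (!c) (h - u) h) T (wrapSum σ (!c) - x)

theorem sum_anchorCost_le (T : ℕ) (σ : G) (e e' : Bool × Fin h → G) (c : Bool) (y : G)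
    (C : Finset G) : ∑ x ∈ C, anchorCost T σ e e' c y x ≤ 2 * T * (2 * h).factorial := by
  have hhead := sum_hitWeight_le e (segment c 0) T (C.map (Equiv.subRight y).toEmbedding)
  have htail := sum_hitWeight_le e' (fun u ↦ segment (!c) (h - u) h) T
    (C.map (Equiv.subLeft (wrapSum σ (!c))).toEmbedding)
  simp only [sum_map, Equiv.coe_toEmbedding, Equiv.subRight_apply, Equiv.subLeft_apply,
    Fintype.card_prod, Fintype.card_bool, Fintype.card_fin] at hhead htail
  simp only [anchorCost, sum_add_distrib]
  lia

theorem two_mul_mul_hitWeight_le {e : Bool × Fin h → G} (he : DissociatedFamily e) (hT : T < h)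
    {I : ℕ → Finset (Bool × Fin h)} (hI : ∀ u < T, #(I u) = u) (x : G) :
    2 * h * hitWeight e I T x ≤ 2 * (2 * h).factorial := by
  simpa using he.card_mul_hitWeight_le (by simpa using hT) hI x

theorem two_mul_mul_hitWeight_segment_zero_le {e : Bool × Fin h → G} (he : DissociatedFamily e)
    (hT : T < h) (c : Bool) (x : G) :
    2 * h * hitWeight e (segment c 0) T x ≤ 2 * (2 * h).factorial :=
  two_mul_mul_hitWeight_le he hT (fun _ hu ↦ card_segment c 0 (hu.trans hT).le) x

theorem two_mul_mul_hitWeight_segment_sub_le {e : Bool × Fin h → G} (he : DissociatedFamily e)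
    (hT : T < h) (c : Bool) (x : G) :
    2 * h * hitWeight e (fun u ↦ segment c (h - u) h) T x ≤ 2 * (2 * h).factorial :=
  two_mul_mul_hitWeight_le he hT
    (fun u hu ↦ by rw [card_segment c _ le_rfl, Nat.sub_sub_self (hu.trans hT).le]) x

theorem two_mul_mul_anchorCost_le {e e' : Bool × Fin h → G} (he : DissociatedFamily e)
    (he' : DissociatedFamily e') (hT : T < h) (σ : G) (c : Bool) (y x : G) :
    2 * h * anchorCost T σ e e' c y x ≤ 4 * (2 * h).factorial := by
  have hhead := two_mul_mul_hitWeight_segment_zero_le he hT c (x - y)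
  have htail := two_mul_mul_hitWeight_segment_sub_le he' hT (!c) (wrapSum σ (!c) - x)
  rw [anchorCost, mul_add]
  lia

theorem exists_ordering_sum_anchorCost_le [DecidableEq G] {e e' : Bool × Fin h → G}
    (he : DissociatedFamily e) (he' : DissociatedFamily e') (hT0 : 0 < T) (hT : 20000 * T ≤ h)
    {ρ : G → ℤ} {X : Finset G} (hρ : Rectifies ρ X) (hpos : ∀ x ∈ X, 0 < ρ x) (σ : G) (c : Bool) :
    ∃ L : List G, L.Nodup ∧ L.toFinset = X ∧
      (∀ i, 0 < i → i < L.length → (L.take i).sum ≠ σ) ∧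
      25 * ∑ i ∈ Ico 1 L.length, anchorCost T σ e e' c L.sum (L.take i).sum ≤
        (2 * h).factorial := by
  obtain ⟨L, hL, hLX, hLσ, hcost⟩ := hρ.exists_ordering_mul_sum_le hpos (q := 200 * T)
    (W := 2 * T * (2 * h).factorial) (M := 4 * (2 * h).factorial / (2 * h)) (by lia) (by positivity)
    (sum_anchorCost_le T σ e e' c (∑ x ∈ X, x))
    (fun x ↦ (Nat.le_div_iff_mul_le (by lia)).2
      ((mul_comm _ _).trans_le (two_mul_mul_anchorCost_le he he' (by lia) σ c _ x))) σ
  refine ⟨L, hL, hLX, hLσ, ?_⟩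
  rw [sum_list_of_toFinset_eq hL hLX]
  set N := (2 * h).factorial
  set S := ∑ i ∈ Ico 1 L.length, anchorCost T σ e e' c (∑ x ∈ X, x) (L.take i).sum
  have hM : 2 * h * (4 * N / (2 * h)) ≤ 4 * N := Nat.mul_div_le _ _
  have hh : 0 < h := by lia
  refine Nat.le_of_mul_le_mul_left (c := 16 * h * T) ?_ (by positivity)
  calc 16 * h * T * (25 * S) = 2 * h * (200 * T * S) := by ring
    _ ≤ 2 * h * (2 * (2 * T * N) + (200 * T) ^ 2 * (4 * N / (2 * h))) := by gcongr
    _ = 8 * h * T * N + 40000 * T ^ 2 * (2 * h * (4 * N / (2 * h))) := by ring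
    _ ≤ 8 * h * T * N + 40000 * T ^ 2 * (4 * N) := by gcongr
    _ = 8 * h * T * N + 8 * T * N * (20000 * T) := by ring
    _ ≤ 8 * h * T * N + 8 * T * N * h := by gcongr
    _ = 16 * h * T * N := by ring

theorem sum_range_le_add_sum_Ico (f : ℕ → ℕ) (m : ℕ) :
    ∑ i ∈ range m, f i ≤ f 0 + ∑ i ∈ Ico 1 m, f i := by
  rcases m with _ | m
  · exact Nat.zero_le _
  · rw [range_eq_Ico, sum_eq_sum_Ico_succ_bot m.succ_pos]

section

variable {σ : G} {L : Bool → List G} {e e' : Bool × Fin h → G}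

open scoped Classical in
theorem eight_mul_card_filter_headConflict_le (he : DissociatedFamily e) (hT0 : 0 < T)
    (hT : 20000 * T ≤ h)
    (hcost : ∀ c, 25 * ∑ i ∈ Ico 1 (L c).length,
      anchorCost T σ e e' c (L c).sum ((L c).take i).sum ≤ (2 * h).factorial) :
    8 * #{π : Equiv.Perm (Bool × Fin h) | HeadConflict T σ L (e ∘ π)} ≤ (2 * h).factorial := by
  have hpoint : ∀ c x, 20000 * hitWeight e (segment c 0) T x ≤ (2 * h).factorial := fun c x ↦ by
    nlinarith [two_mul_mul_hitWeight_segment_zero_le he (by lia : T < h) c x]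
  have hside (c : Bool) : 20 * (∑ i ∈ range (L c).length,
        hitWeight e (segment c 0) T (((L c).take i).sum - (L c).sum) +
          hitWeight e (segment c 0) T (wrapSum σ (!c) - (L c).sum)) ≤ (2 * h).factorial := by
    have hsplit := sum_range_le_add_sum_Ico
      (fun i ↦ hitWeight e (segment c 0) T (((L c).take i).sum - (L c).sum)) (L c).length
    have hle := hcost c
    simp only [anchorCost, sum_add_distrib] at hle
    have hfirst := hpoint c (((L c).take 0).sum - (L c).sum)
    have hwrap := hpoint c (wrapSum σ (!c) - (L c).sum)
    lia
  have hunion := card_filter_headConflict_le T σ L e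
  rw [Fintype.sum_bool] at hunion
  linarith [hside true, hside false]

open scoped Classical in
theorem eight_mul_card_filter_tailConflict_le (he' : DissociatedFamily e') (hT0 : 0 < T)
    (hT : 20000 * T ≤ h)
    (hcost : ∀ c, 25 * ∑ i ∈ Ico 1 (L c).length,
      anchorCost T σ e e' c (L c).sum ((L c).take i).sum ≤ (2 * h).factorial) :
    8 * #{π : Equiv.Perm (Bool × Fin h) | TailConflict T σ L (e' ∘ π)} ≤ (2 * h).factorial := by
  have hpoint : ∀ c x, 20000 * hitWeight e' (fun u ↦ segment c (h - u) h) T x ≤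
      (2 * h).factorial := fun c x ↦ by
    nlinarith [two_mul_mul_hitWeight_segment_sub_le he' (by lia : T < h) c x]
  have hside : ∀ c, 20 * ∑ i ∈ range ((L !c).length + 1),
      hitWeight e' (fun u ↦ segment c (h - u) h) T (wrapSum σ c - ((L !c).take i).sum) ≤
        (2 * h).factorial := fun c ↦ by
    rw [sum_range_succ]
    have hsplit := sum_range_le_add_sum_Ico (fun i ↦ hitWeight e' (fun u ↦ segment c (h - u) h) T
      (wrapSum σ c - ((L !c).take i).sum)) (L !c).length
    have hle := hcost !c
    simp only [anchorCost, sum_add_distrib, Bool.not_not] at hle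
    have hfirst := hpoint c (wrapSum σ c - ((L !c).take 0).sum)
    have hlast := hpoint c (wrapSum σ c - ((L !c).take (L !c).length).sum)
    lia
  have hunion := card_filter_tailConflict_le T σ L e'
  rw [Fintype.sum_bool] at hunion
  linarith [hside true, hside false]

end

end Position

theorem nodup_append_and_toFinset_append {α : Type*} [DecidableEq α] {ρ : α → ℤ} {E : Finset α}
    {l l' : List α} (hl : l.Nodup) (hl' : l'.Nodup) (h0 : ∀ x ∈ E, ρ x ≠ 0)
    (hneg : l.toFinset = {x ∈ E | ρ x < 0}) (hpos : l'.toFinset = {x ∈ E | 0 < ρ x}) :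
    (l ++ l').Nodup ∧ (l ++ l').toFinset = E := by
  have hmem : ∀ x, x ∈ l ↔ x ∈ E ∧ ρ x < 0 := fun x ↦ by rw [← List.mem_toFinset, hneg, mem_filter]
  have hmem' : ∀ x, x ∈ l' ↔ x ∈ E ∧ 0 < ρ x := fun x ↦ by
    rw [← List.mem_toFinset, hpos, mem_filter]
  refine ⟨hl.append hl' fun x hx hx' ↦ ?_, ?_⟩
  · exact ((hmem x).1 hx).2.not_gt ((hmem' x).1 hx').2
  · ext x
    rw [List.mem_toFinset, List.mem_append, hmem, hmem', ← and_or_left, ← ne_iff_lt_or_gt]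
    exact and_iff_left_of_imp (h0 x)

open Position

variable {h T : ℕ} {G : Type*} [AddCommGroup G] {ρ : G → ℤ} {E : Finset G}

theorem Rectifies.exists_sum_filter_neg_ne (hρ : Rectifies ρ E) (σ : G) :
    ∃ ρ' : G → ℤ, Rectifies ρ' E ∧
      ({x ∈ E | ρ' x < 0}.Nonempty → ∑ x ∈ E with ρ' x < 0, x ≠ σ) := by
  by_contra! hall
  obtain ⟨hneg, hnegσ⟩ := hall ρ hρ
  obtain ⟨hpos, hposσ⟩ := hall (-ρ) hρ.neg
  have hsum := (hρ _ (filter_subset _ _) _ (filter_subset _ _)).1 (hnegσ.trans hposσ.symm)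
  have hlt : ∑ x ∈ E with ρ x < 0, ρ x < 0 := sum_neg (fun x hx ↦ (mem_filter.1 hx).2) hneg
  have hgt : 0 < ∑ x ∈ E with (-ρ) x < 0, ρ x :=
    sum_pos (fun x hx ↦ neg_neg_iff_pos.1 (mem_filter.1 hx).2) hpos
  exact (hlt.trans hgt).ne hsum

theorem exists_isAnchoring [DecidableEq G] {e e' : Bool × Fin h → G} (he : DissociatedFamily e)
    (he' : DissociatedFamily e') (hT0 : 0 < T) (hT : 20000 * T ≤ h) (hρ : Rectifies ρ E)
    (h0 : (0 : G) ∉ E) (σ : G) :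
    ∃ L : Bool → List G, IsAnchoring E σ L ∧
      ∀ c, 25 * ∑ i ∈ Ico 1 (L c).length, anchorCost T σ e e' c (L c).sum ((L c).take i).sum ≤
        (2 * h).factorial := by
  obtain ⟨ρ, hρ, hσ⟩ := hρ.exists_sum_filter_neg_ne σ
  have hρneg := hρ.neg.mono (filter_subset (ρ · < 0) E)
  have hρpos := hρ.mono (filter_subset (0 < ρ ·) E)
  have hneg : ∀ x ∈ {x ∈ E | ρ x < 0}, 0 < (-ρ) x := fun x hx ↦ neg_pos.2 (mem_filter.1 hx).2
  have hpos : ∀ x ∈ {x ∈ E | 0 < ρ x}, 0 < ρ x := fun x hx ↦ (mem_filter.1 hx).2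
  obtain ⟨l, hl, hlE, hlσ, hlcost⟩ :=
    exists_ordering_sum_anchorCost_le he he' hT0 hT hρneg hneg σ false
  obtain ⟨l', hl', hlE', -, hlcost'⟩ :=
    exists_ordering_sum_anchorCost_le he he' hT0 hT hρpos hpos σ true
  obtain ⟨hnodup, hunion⟩ := nodup_append_and_toFinset_append hl hl'
    (fun x ↦ hρ.apply_ne_zero h0) hlE hlE'
  refine ⟨fun c ↦ cond c l' l, ⟨hnodup, hunion, ?_, ?_⟩, ?_⟩
  · rintro (_ | _) i j hij hj
    · exact hρneg.take_sum_ne_take_sum hneg hl (fun x hx ↦ hlE ▸ List.mem_toFinset.2 hx) hij hj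
    · exact hρpos.take_sum_ne_take_sum hpos hl' (fun x hx ↦ hlE' ▸ List.mem_toFinset.2 hx) hij hj
  · intro i hi hilen
    rcases hilen.lt_or_eq with hlt | rfl
    · exact hlσ i hi hlt
    · have hne : {x ∈ E | ρ x < 0}.Nonempty := hlE ▸ List.toFinset_nonempty_iff _ |>.2
        (List.ne_nil_of_length_pos hi)
      simpa only [cond_false, List.take_length, sum_list_of_toFinset_eq hl hlE] using hσ hne
  · rintro (_ | _)
    exacts [hlcost, hlcost']

theorem IsBlockDecomposition.sequenceable_of_rectifies [DecidableEq G] {r : ℕ} {A : Finset G}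
    {d : Fin (r + 1) → Bool × Fin h → G} (H : IsBlockDecomposition A E d) (hr : 0 < r)
    (hρ : Rectifies ρ E) (h0 : (0 : G) ∉ E) (hT0 : 0 < T) (hT : 20000 * T ^ 2 ≤ h)
    (hA : 2 * #A ^ 2 < 2 ^ T) : Sequenceable A := by
  have hTh : 20000 * T ≤ h := by nlinarith
  have hN : Fintype.card (Equiv.Perm (Bool × Fin h)) = (2 * h).factorial := by
    simp [Fintype.card_perm]
  obtain ⟨L, hL, hcost⟩ := exists_isAnchoring (H.dissociated 0) (H.dissociated (Fin.last r)) hT0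
    hTh hρ h0 (∑ x ∈ A, x)
  refine H.sequenceable_of_isAnchoring hr hL hT0 (by lia) hA ?_ ?_ <;> rw [hN]
  · exact eight_mul_card_filter_headConflict_le (H.dissociated 0) hT0 hTh hcost
  · exact eight_mul_card_filter_tailConflict_le (H.dissociated (Fin.last r)) hT0 hTh hcost

end Anchors

section Main

theorem sequenceable_of_card_le_one {G : Type*} [AddCommGroup G] [DecidableEq G] {A : Finset G}
    (hA : #A ≤ 1) : Sequenceable A := by
  rw [← A.toList_toFinset]
  refine sequenceable_toFinset A.nodup_toList fun i j hij hj hproper ↦ ?_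
  rw [length_toList] at hj hproper
  lia

variable {k : ℕ} [NeZero k] {A : Finset (ZMod k)}

theorem sequenceable_of_pow_lt_minFac {T h Q : ℕ} (h0 : 0 ∉ A) (hT0 : 0 < T)
    (hT : 20000 * T ^ 2 ≤ h) (hA : 2 * #A ^ 2 < 2 ^ T) (hQ : 2 * #A * (4 * h) < Q)
    (hk : Q ^ (4 * h) < k.minFac) : Sequenceable A := by
  have hh : 0 < h := by nlinarith
  have : NeZero h := ⟨hh.ne'⟩
  have hcard : Fintype.card (Bool × Fin h) = 2 * h := by simp
  obtain ⟨s, E, d, H⟩ := exists_isBlockDecomposition (Bool × Fin h) A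
  rcases le_or_gt s 1 with hs | hs
  · have hdis : ∀ B ⊆ A, AddDissociated (B : Set (ZMod k)) → #B ≤ 4 * h := fun B hBA hB ↦ by
      nlinarith [H.card_le_of_addDissociated hBA hB]
    obtain ⟨ρ, hρ⟩ := exists_rectifies le_rfl hdis hQ hk
    exact hρ.sequenceable h0
  · have hdis : ∀ B ⊆ E, AddDissociated (B : Set (ZMod k)) → #B ≤ 4 * h := fun B hBE hB ↦ by
      linarith [H.card_lt B hBE hB]
    have hEA : E ⊆ A := H.union ▸ subset_union_left
    obtain ⟨ρ, hρ⟩ := exists_rectifies (card_le_card hEA) hdis hQ hk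
    obtain ⟨r, rfl⟩ : ∃ r, s = r + 1 := ⟨s - 1, by lia⟩
    exact H.sequenceable_of_rectifies (by lia) hρ (fun hmem ↦ h0 (hEA hmem)) hT0 hT hA

theorem sequenceable_of_card_lt_two_pow {m : ℕ} (hm : 0 < m) (h0 : 0 ∉ A) (hA : #A < 2 ^ (m + 1))
    (hk : 2 ^ (52000000 * m ^ 3) < k.minFac) : Sequenceable A := by
  refine sequenceable_of_pow_lt_minFac (T := 2 * m + 3) (h := 500000 * m ^ 2) (Q := 2 ^ (26 * m)) h0
    (by lia) (by nlinarith) ?_ ?_ ?_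
  · calc 2 * #A ^ 2 < 2 * (2 ^ (m + 1)) ^ 2 := by gcongr
      _ = 2 ^ (2 * m + 3) := by ring
  · calc 2 * #A * (4 * (500000 * m ^ 2)) ≤ 2 * 2 ^ (m + 1) * (4 * (500000 * (2 ^ m) ^ 2)) := by
          gcongr
          exact Nat.lt_two_pow_self.le
      _ < 2 * 2 ^ (m + 1) * (2 ^ 21 * (2 ^ m) ^ 2) := by
          rw [← mul_assoc 4]
          gcongr
          norm_num
      _ = 2 ^ (3 * m + 23) := by ring
      _ ≤ 2 ^ (26 * m) := by gcongr <;> lia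
  · rw [← pow_mul]
    convert hk using 2
    ring

theorem two_pow_lt_of_two_pow_le_exp {m C p : ℕ} {c : ℝ} (hm : 0 < m) (hp : 0 < p) (hc : 0 ≤ c)
    (hcC : c ^ 3 * C < Real.log 2 ^ 2)
    (h : (2 : ℝ) ^ m ≤ Real.exp (c * Real.log p ^ ((1 : ℝ) / 3))) : 2 ^ (C * m ^ 3) < p := by
  have hlogp : 0 ≤ Real.log p := Real.log_natCast_nonneg p
  have hlog : m * Real.log 2 ≤ c * Real.log p ^ ((1 : ℝ) / 3) := by
    rw [← Real.log_pow]
    exact (Real.log_le_iff_le_exp (by positivity)).2 h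
  have hcube : (Real.log p ^ ((1 : ℝ) / 3)) ^ 3 = Real.log p := by
    rw [← Real.rpow_mul_natCast hlogp]
    norm_num
  have hmain : c ^ 3 * Real.log (2 ^ (C * m ^ 3)) < c ^ 3 * Real.log p := by
    calc c ^ 3 * Real.log (2 ^ (C * m ^ 3)) = c ^ 3 * C * (m ^ 3 * Real.log 2) := by
          rw [Real.log_pow]
          push_cast
          ring
      _ < Real.log 2 ^ 2 * (m ^ 3 * Real.log 2) := by
          gcongr
      _ = (m * Real.log 2) ^ 3 := by ring
      _ ≤ (c * Real.log p ^ ((1 : ℝ) / 3)) ^ 3 := by gcongr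
      _ = c ^ 3 * Real.log p := by rw [mul_pow, hcube]
  have hlt := lt_of_mul_lt_mul_left hmain (by positivity)
  exact_mod_cast (Real.log_lt_log_iff (by positivity) (by positivity)).1 hlt

end Main

/-- There exists an absolute constant `c > 0` such that for every integer `k ≥ 2`,
with `p` the least prime divisor of `k`, every subset `A ⊆ ℤ_k \ {0}` with
`|A| ≤ exp(c (log p)^(1/3))` is sequenceable. -/
theorem improved_classical_bound :
    ∃ c : ℝ, 0 < c ∧
      ∀ k : ℕ, 2 ≤ k →
        ∀ A : Finset (ZMod k), (0 : ZMod k) ∉ A →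
          (A.card : ℝ) ≤ Real.exp (c * (Real.log (k.minFac : ℝ)) ^ ((1 : ℝ) / 3)) →
            Sequenceable A := by
  refine ⟨1 / 1000, by norm_num, fun k hk A h0 hA ↦ ?_⟩
  have : NeZero k := ⟨by lia⟩
  rcases le_or_gt #A 1 with hcard | hcard
  · exact sequenceable_of_card_le_one hcard
  have hm : 0 < Nat.log 2 #A := Nat.log_pos one_lt_two hcard
  refine sequenceable_of_card_lt_two_pow hm h0 (Nat.lt_pow_succ_log_self one_lt_two _) ?_
  refine two_pow_lt_of_two_pow_le_exp (c := 1 / 1000) hm k.minFac_pos (by norm_num) ?_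
    (le_trans ?_ hA)
  · norm_num
    nlinarith [Real.log_two_gt_d9]
  · exact_mod_cast Nat.pow_log_le_self 2 (by lia)
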